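/- Let T = (G, P, L) be a canvas that is a harmonica from P to P' with government 𝒞. Then Φ_T(P', 𝒞) is a government. -/

import Mathlib

/-!
Common definitions: plane graphs (given by a concrete embedding in the plane),
outer face, canvases, list colorings, governments, harmonicas and coloring
harmonicas, following Postle–Thomas,
"Five-list-coloring graphs on surfaces III".
-/

open Set

universe u

/-- A finite simple graph together with an embedding in the plane:
each vertex gets a point, each edge a simple arc joining its endpoints;
arcs avoid other vertices, and two distinct edges meet only in common
endpoints. -/
structure PlaneGraph (V : Type u) where
  verts : Set V
  Adj : V → V → Prop
  finite_verts : verts.Finite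
  adj_symm : ∀ u v, Adj u v → Adj v u
  adj_irrefl : ∀ v, ¬Adj v v
  adj_mem : ∀ u v, Adj u v → u ∈ verts
  pos : V → ℝ × ℝ
  arc : Sym2 V → Set (ℝ × ℝ)
  pos_injOn : Set.InjOn pos verts
  arc_arc : ∀ u v, Adj u v → ∃ f : ℝ → ℝ × ℝ,
    ContinuousOn f (Set.Icc 0 1) ∧ Set.InjOn f (Set.Icc 0 1) ∧
    f '' Set.Icc 0 1 = arc s(u, v) ∧ f 0 = pos u ∧ f 1 = pos v
  arc_avoid : ∀ u v, Adj u v → ∀ w ∈ verts, pos w ∈ arc s(u, v) → w = u ∨ w = v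
  arc_meet : ∀ u v x y, Adj u v → Adj x y → s(u, v) ≠ s(x, y) →
    arc s(u, v) ∩ arc s(x, y) ⊆ pos '' (({u, v} : Set V) ∩ ({x, y} : Set V))

namespace PlaneGraph

variable {V : Type u}

/-- The point set of the drawing of the plane graph. -/
def image (G : PlaneGraph V) : Set (ℝ × ℝ) :=
  G.pos '' G.verts ∪ ⋃ (u : V) (v : V) (_ : G.Adj u v), G.arc s(u, v)

/-- The outer (unbounded) face of the drawing. -/
def outerFace (G : PlaneGraph V) : Set (ℝ × ℝ) :=
  {p | p ∉ G.image ∧ ¬Bornology.IsBounded (connectedComponentIn G.imageᶜ p)}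

/-- A vertex incident with (i.e. on the boundary of) the outer face. -/
def OnOuter (G : PlaneGraph V) (v : V) : Prop := G.pos v ∈ frontier G.outerFace

/-- An edge incident with (i.e. on the boundary of) the outer face. -/
def EdgeOnOuter (G : PlaneGraph V) (u v : V) : Prop :=
  G.arc s(u, v) ⊆ frontier G.outerFace

/-- The vertices of the boundary of the outer face. -/
def boundaryVerts (G : PlaneGraph V) : Set V := {v | v ∈ G.verts ∧ G.OnOuter v}

/-- Connectivity of a plane graph. -/
def Connected (G : PlaneGraph V) : Prop :=
  G.verts.Nonempty ∧ ∀ u ∈ G.verts, ∀ v ∈ G.verts, Relation.ReflTransGen G.Adj u v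

/-- `H` is a (plane) subgraph of `G`, drawn the same way. -/
def IsSubgraph (H G : PlaneGraph V) : Prop :=
  H.verts ⊆ G.verts ∧ (∀ u v, H.Adj u v → G.Adj u v) ∧
  (∀ v ∈ H.verts, H.pos v = G.pos v) ∧
  (∀ u v, H.Adj u v → H.arc s(u, v) = G.arc s(u, v))

/-- Delete a set of vertices (and all incident edges) from a plane graph. -/
def deleteVerts (G : PlaneGraph V) (s : Set V) : PlaneGraph V where
  verts := G.verts \ s
  Adj u v := G.Adj u v ∧ u ∉ s ∧ v ∉ s
  finite_verts := G.finite_verts.subset Set.diff_subset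
  adj_symm := fun u v h => ⟨G.adj_symm u v h.1, h.2.2, h.2.1⟩
  adj_irrefl := fun v h => G.adj_irrefl v h.1
  adj_mem := fun u v h => ⟨G.adj_mem u v h.1, h.2.1⟩
  pos := G.pos
  arc := G.arc
  pos_injOn := G.pos_injOn.mono Set.diff_subset
  arc_arc := fun u v h => G.arc_arc u v h.1
  arc_avoid := fun u v h w hw hm => G.arc_avoid u v h.1 w hw.1 hm
  arc_meet := fun u v x y h h' hne => G.arc_meet u v x y h.1 h'.1 hne

/-- `G` has a proper coloring from the lists `L`. -/
def HasLColoring (G : PlaneGraph V) (L : V → Finset ℕ) : Prop :=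
  ∃ φ : V → ℕ, (∀ v ∈ G.verts, φ v ∈ L v) ∧ ∀ u v, G.Adj u v → φ u ≠ φ v

/-- A vertex of degree exactly one. -/
def DegreeOne (G : PlaneGraph V) (x : V) : Prop :=
  (∃ a, G.Adj x a) ∧ ∀ a b, G.Adj x a → G.Adj x b → a = b

end PlaneGraph

/-- The cyclic successor of an index in a list. -/
def cycNext {V : Type u} (C : List V) (i : Fin C.length) : Fin C.length :=
  ⟨((i : ℕ) + 1) % C.length, Nat.mod_lt _ (lt_of_le_of_lt (Nat.zero_le _) i.isLt)⟩

/-- The list `C` is a cycle of `G` whose image is exactly the boundary of the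
outer face of `G`; i.e. `G` is a plane graph with outer cycle `C`. -/
def PlaneGraph.IsOuterCycle {V : Type u} (G : PlaneGraph V) (C : List V) : Prop :=
  C.Nodup ∧ 3 ≤ C.length ∧ (∀ v ∈ C, v ∈ G.verts) ∧
  (∀ i : Fin C.length, G.Adj (C.get i) (C.get (cycNext C i))) ∧
  frontier G.outerFace =
    G.pos '' {v | v ∈ C} ∪ ⋃ i : Fin C.length, G.arc s(C.get i, C.get (cycNext C i))

/-- `pq` is an edge of the cycle (given as a list) `C`. -/
def IsCycleEdge {V : Type u} (C : List V) (p q : V) : Prop :=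
  ∃ i : Fin C.length, s(p, q) = s(C.get i, C.get (cycNext C i))

/-- `(G, S, L)` is a canvas, where the subgraph `S` of the boundary of the
outer face of `G` is given by its vertex set `Sverts` and adjacency `SAdj`. -/
structure IsCanvas {V : Type u} (G : PlaneGraph V) (Sverts : Set V) (SAdj : V → V → Prop)
    (L : V → Finset ℕ) : Prop where
  sadj_symm : ∀ u v, SAdj u v → SAdj v u
  sadj_sub : ∀ u v, SAdj u v → G.Adj u v
  sadj_mem : ∀ u v, SAdj u v → u ∈ Sverts
  sverts_sub : Sverts ⊆ G.verts
  sverts_outer : ∀ v ∈ Sverts, G.OnOuter v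
  sedges_outer : ∀ u v, SAdj u v → G.EdgeOnOuter u v
  lists_nonempty : ∀ v ∈ G.verts, (L v).Nonempty
  card_inner : ∀ v ∈ G.verts, ¬G.OnOuter v → 5 ≤ (L v).card
  card_outside_S : ∀ v ∈ G.verts, v ∉ Sverts → 3 ≤ (L v).card
  scolorable : ∃ φ : V → ℕ, (∀ v ∈ Sverts, φ v ∈ L v) ∧ ∀ u v, SAdj u v → φ u ≠ φ v

/-- The adjacency relation of the single-edge path `p₁p₂`. -/
def pathAdj {V : Type u} (p1 p2 : V) : V → V → Prop :=
  fun u v => (u = p1 ∧ v = p2) ∨ (u = p2 ∧ v = p1)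

/-- `(G, P, L)` is a canvas whose precolored subgraph is a path `P = p₁p₂` of
length one (in the boundary of the outer face of `G`). -/
def IsPathCanvas {V : Type u} (G : PlaneGraph V) (p1 p2 : V) (L : V → Finset ℕ) : Prop :=
  p1 ≠ p2 ∧ IsCanvas G {p1, p2} (pathAdj p1 p2) L

/-- `c = (c₁, c₂)` is a proper `L`-coloring of the edge `p₁p₂`. -/
def ProperEdgeColoring {V : Type u} (L : V → Finset ℕ) (p1 p2 : V) (c : ℕ × ℕ) : Prop :=
  c.1 ∈ L p1 ∧ c.2 ∈ L p2 ∧ c.1 ≠ c.2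

/-- `Φ_T(P', 𝒞)`: the colorings of the edge `q₁q₂` extendable to an `L`-coloring
of `G` whose restriction to `p₁p₂` lies in `C`. -/
def Phi {V : Type u} (G : PlaneGraph V) (L : V → Finset ℕ) (p1 p2 q1 q2 : V)
    (C : Set (ℕ × ℕ)) : Set (ℕ × ℕ) :=
  {c | ∃ φ : V → ℕ, (∀ v ∈ G.verts, φ v ∈ L v) ∧ (∀ u v, G.Adj u v → φ u ≠ φ v) ∧
    (φ p1, φ p2) ∈ C ∧ φ q1 = c.1 ∧ φ q2 = c.2}

/-- The set of colors used on the first vertex of the path. -/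
def fstColors (C : Set (ℕ × ℕ)) : Set ℕ := Prod.fst '' C

/-- The set of colors used on the second vertex of the path. -/
def sndColors (C : Set (ℕ × ℕ)) : Set ℕ := Prod.snd '' C

/-- A dictatorship: at least two (distinct) colorings, all agreeing on one of
the two vertices (the dictator). -/
def IsDictatorship (C : Set (ℕ × ℕ)) : Prop :=
  (∃ c ∈ C, ∃ d ∈ C, c ≠ d) ∧
  ((∃ a, ∀ c ∈ C, c.1 = a) ∨ (∃ a, ∀ c ∈ C, c.2 = a))

/-- A democracy: exactly the two colorings `(x, y)` and `(y, x)`. -/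
def IsDemocracy (C : Set (ℕ × ℕ)) : Prop :=
  ∃ x y : ℕ, x ≠ y ∧ C = {(x, y), (y, x)}

/-- A government is a dictatorship or a democracy. -/
def IsGovernment (C : Set (ℕ × ℕ)) : Prop := IsDictatorship C ∨ IsDemocracy C

/-- A confederacy: not a government, but the union of two governments. -/
def IsConfederacy (C : Set (ℕ × ℕ)) : Prop :=
  ¬IsGovernment C ∧ ∃ C1 C2 : Set (ℕ × ℕ), IsGovernment C1 ∧ IsGovernment C2 ∧ C = C1 ∪ C2

/-- The canvas `(G, p₁p₂, L)` is a harmonica from the path `p₁p₂` to the path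
`q₁q₂` with government `C`. -/
inductive IsHarmonica {V : Type u} (L : V → Finset ℕ) :
    PlaneGraph V → V → V → V → V → Set (ℕ × ℕ) → Prop where
  /-- Rule (i): `G = P = P'`. -/
  | same (G : PlaneGraph V) (p1 p2 q1 q2 : V) (C : Set (ℕ × ℕ))
      (hcanvas : IsPathCanvas G p1 p2 L)
      (hproper : ∀ c ∈ C, ProperEdgeColoring L p1 p2 c)
      (hgov : IsGovernment C)
      (hq : (q1 = p1 ∧ q2 = p2) ∨ (q1 = p2 ∧ q2 = p1))
      (hverts : G.verts = {p1, p2})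
      (hedges : ∀ u v, G.Adj u v → pathAdj p1 p2 u v) :
      IsHarmonica L G p1 p2 q1 q2 C
  /-- Rule (ii): `C` is a dictatorship, `G = P ∪ P'`, `V(P) ∩ V(P') = {z}`
  where `z` is the dictator. -/
  | cherry (G : PlaneGraph V) (p1 p2 q1 q2 z : V) (C : Set (ℕ × ℕ))
      (hcanvas : IsPathCanvas G p1 p2 L)
      (hproper : ∀ c ∈ C, ProperEdgeColoring L p1 p2 c)
      (hdict : IsDictatorship C)
      (hq : q1 ≠ q2) (hqadj : G.Adj q1 q2) (hqout : G.EdgeOnOuter q1 q2)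
      (hverts : G.verts = {p1, p2, q1, q2})
      (hedges : ∀ u v, G.Adj u v → pathAdj p1 p2 u v ∨ pathAdj q1 q2 u v)
      (hz : (({p1, p2} : Set V) ∩ ({q1, q2} : Set V)) = {z})
      (hzdict : (z = p1 ∧ ∃ a, ∀ c ∈ C, c.1 = a) ∨ (z = p2 ∧ ∃ a, ∀ c ∈ C, c.2 = a)) :
      IsHarmonica L G p1 p2 q1 q2 C
  /-- Rule (iii): `C` is a dictatorship with dictator `z ∈ V(P)` in color `c`,
  sitting on a triangle `z u₁ u₂`. -/
  | dict (G : PlaneGraph V) (p1 p2 q1 q2 z w u1 u2 : V) (c : ℕ) (L0 : Finset ℕ)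
      (C C' : Set (ℕ × ℕ))
      (hcanvas : IsPathCanvas G p1 p2 L)
      (hproper : ∀ d ∈ C, ProperEdgeColoring L p1 p2 d)
      (hdict : IsDictatorship C)
      (hq : q1 ≠ q2) (hqadj : G.Adj q1 q2) (hqout : G.EdgeOnOuter q1 q2)
      (hz : (z = p1 ∧ w = p2 ∧ (∀ d ∈ C, d.1 = c) ∧
              (u1 = w → sndColors C = (L0 : Set ℕ)) ∧
              (u2 = w → sndColors C = (L0 : Set ℕ))) ∨
            (z = p2 ∧ w = p1 ∧ (∀ d ∈ C, d.2 = c) ∧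
              (u1 = w → fstColors C = (L0 : Set ℕ)) ∧
              (u2 = w → fstColors C = (L0 : Set ℕ))))
      (hzu1 : G.Adj z u1) (hzu2 : G.Adj z u2) (hu12 : G.Adj u1 u2)
      (hL0 : L0.card = 2)
      (hLu1 : u1 ∉ ({p1, p2} : Set V) → L u1 = L0 ∪ {c})
      (hLu2 : u2 ∉ ({p1, p2} : Set V) → L u2 = L0 ∪ {c})
      (hu1P : u1 ∈ ({p1, p2} : Set V) → u1 = w)
      (hu2P : u2 ∈ ({p1, p2} : Set V) → u2 = w)
      (hdem : IsDemocracy C')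
      (hC'1 : fstColors C' = (L0 : Set ℕ)) (hC'2 : sndColors C' = (L0 : Set ℕ))
      (hrec : IsHarmonica L (G.deleteVerts (({p1, p2} : Set V) \ {u1, u2})) u1 u2 q1 q2 C') :
      IsHarmonica L G p1 p2 q1 q2 C
  /-- Rule (iv), with `i = 1`: `C` is a democracy, `z` is a common neighbor of
  `p₁, p₂`, and `p₁` is deleted. -/
  | demo1 (G : PlaneGraph V) (p1 p2 q1 q2 z : V) (a b c : ℕ) (L0 : Finset ℕ)
      (C C' : Set (ℕ × ℕ))
      (hcanvas : IsPathCanvas G p1 p2 L)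
      (hproper : ∀ d ∈ C, ProperEdgeColoring L p1 p2 d)
      (hdemC : IsDemocracy C)
      (hq : q1 ≠ q2) (hqadj : G.Adj q1 q2) (hqout : G.EdgeOnOuter q1 q2)
      (hz1 : G.Adj z p1) (hz2 : G.Adj z p2)
      (hLz : L z = L0 ∪ {c})
      (hC1 : fstColors C = (L0 : Set ℕ)) (hC2 : sndColors C = (L0 : Set ℕ))
      (hab : a ≠ b) (hL0ab : (L0 : Set ℕ) = {a, b})
      (hC' : C' = {(c, a), (c, b)})
      (hrec : IsHarmonica L (G.deleteVerts {p1}) z p2 q1 q2 C') :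
      IsHarmonica L G p1 p2 q1 q2 C
  /-- Rule (iv), with `i = 2`: `C` is a democracy, `z` is a common neighbor of
  `p₁, p₂`, and `p₂` is deleted. -/
  | demo2 (G : PlaneGraph V) (p1 p2 q1 q2 z : V) (a b c : ℕ) (L0 : Finset ℕ)
      (C C' : Set (ℕ × ℕ))
      (hcanvas : IsPathCanvas G p1 p2 L)
      (hproper : ∀ d ∈ C, ProperEdgeColoring L p1 p2 d)
      (hdemC : IsDemocracy C)
      (hq : q1 ≠ q2) (hqadj : G.Adj q1 q2) (hqout : G.EdgeOnOuter q1 q2)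
      (hz1 : G.Adj z p1) (hz2 : G.Adj z p2)
      (hLz : L z = L0 ∪ {c})
      (hC1 : fstColors C = (L0 : Set ℕ)) (hC2 : sndColors C = (L0 : Set ℕ))
      (hab : a ≠ b) (hL0ab : (L0 : Set ℕ) = {a, b})
      (hC' : C' = {(c, a), (c, b)})
      (hrec : IsHarmonica L (G.deleteVerts {p2}) z p1 q1 q2 C') :
      IsHarmonica L G p1 p2 q1 q2 C

/-- `(G, L)` is a coloring harmonica from `uv` to `w` (source `Sum.inr (u, v)`)
or from `u` to `w` (source `Sum.inl u`). -/
inductive IsColoringHarmonica {V : Type u} [DecidableEq V] :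
    PlaneGraph V → (V → Finset ℕ) → V ⊕ V × V → V → Prop where
  /-- `G` is a triangle with vertex set `{u, v, w}`, `L(u) = L(v) = L(w)` and
  `|L(u)| = 2`. -/
  | tri (G : PlaneGraph V) (L : V → Finset ℕ) (u v w : V)
      (hconn : G.Connected) (huv : u ≠ v) (huw : u ≠ w) (hvw : v ≠ w)
      (hu : G.OnOuter u) (hv : G.OnOuter v) (hw : G.OnOuter w)
      (huvout : G.EdgeOnOuter u v)
      (hverts : G.verts = {u, v, w})
      (hadjuv : G.Adj u v) (hadjvw : G.Adj v w) (hadjuw : G.Adj u w)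
      (hLuv : L u = L v) (hLvw : L v = L w) (hcard : (L u).card = 2) :
      IsColoringHarmonica G L (Sum.inr (u, v)) w
  /-- There is a triangle `uvz` on the outer face; delete one or both of
  `u, v` and recurse from `z`. -/
  | step (G : PlaneGraph V) (L : V → Finset ℕ) (u v w z : V) (s : Set V)
      (hconn : G.Connected) (huv : u ≠ v) (huw : u ≠ w) (hvw : v ≠ w)
      (hu : G.OnOuter u) (hv : G.OnOuter v) (hw : G.OnOuter w)
      (huvout : G.EdgeOnOuter u v)
      (hadjuv : G.Adj u v) (hadjuz : G.Adj u z) (hadjvz : G.Adj v z)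
      (hz : G.OnOuter z)
      (hLuv : L u = L v) (hsub : L u ⊆ L z)
      (hcardu : (L u).card = 2) (hcardz : (L z).card = 3)
      (hs : s = {u} ∨ s = {v} ∨ s = ({u, v} : Set V))
      (hrec : IsColoringHarmonica (G.deleteVerts s)
        (Function.update L z (L z \ L u)) (Sum.inl z) w) :
      IsColoringHarmonica G L (Sum.inr (u, v)) w
  /-- `|L(u)| = 1`, `u` sits on a triangle `uxy`; delete `u` and recurse
  from `xy`. -/
  | vert (G : PlaneGraph V) (L : V → Finset ℕ) (u w x y : V)
      (hconn : G.Connected) (huw : u ≠ w)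
      (hu : G.OnOuter u) (hw : G.OnOuter w)
      (hx : G.OnOuter x) (hy : G.OnOuter y)
      (hadjux : G.Adj u x) (hadjuy : G.Adj u y) (hadjxy : G.Adj x y)
      (hcardu : (L u).card = 1)
      (hLxy : L x \ L u = L y \ L u) (hcardx : (L x \ L u).card = 2)
      (hrec : IsColoringHarmonica (G.deleteVerts {u})
        (Function.update (Function.update L x (L x \ L u)) y (L y \ L u))
        (Sum.inr (x, y)) w) :
      IsColoringHarmonica G L (Sum.inl u) w

/-- `(G, L)` contains a coloring harmonica `(H, L')` with the given source and
target: `H` is a subgraph of `G` and `L'` agrees with `L` on `V(H)`. -/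
def ContainsColoringHarmonica {V : Type u} [DecidableEq V] (G : PlaneGraph V)
    (L : V → Finset ℕ) (st : V ⊕ V × V) (w : V) : Prop :=
  ∃ (H : PlaneGraph V) (L' : V → Finset ℕ), H.IsSubgraph G ∧
    (∀ x ∈ H.verts, L' x = L x) ∧ IsColoringHarmonica H L' st w

/-- `v` is a cutvertex of the boundary of the outer face of `G`. -/
def BoundaryCutvertex {V : Type u} (G : PlaneGraph V) (v : V) : Prop :=
  ∃ a b : V, a ∈ G.boundaryVerts ∧ b ∈ G.boundaryVerts ∧ a ≠ v ∧ b ≠ v ∧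
    Relation.ReflTransGen (fun x y => G.Adj x y ∧ G.EdgeOnOuter x y) a b ∧
    ¬Relation.ReflTransGen
      (fun x y => G.Adj x y ∧ G.EdgeOnOuter x y ∧ x ≠ v ∧ y ≠ v) a b

open Classical in
/-- The list assignment of the democratic reduction `T(P, L0, x)`:
remove the colors of `L0` from the list of `x` and from the lists of all
neighbors of `P` other than `y`. -/
noncomputable def reducedL {V : Type u} (G : PlaneGraph V) (L : V → Finset ℕ)
    (L0 : Finset ℕ) (Q : List V) (x y : V) : V → Finset ℕ := fun w =>
  if w = x ∨ (w ≠ y ∧ ∃ p ∈ Q, G.Adj w p) then L w \ L0 else L w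

/-- The vertex set of the precolored subgraph of the democratic reduction:
`S ∖ V(P)`, together with `x` as an isolated vertex if its new list is
smaller than 3. -/
def reducedSverts {V : Type u} (Sverts : Set V) (Q : List V) (x : V)
    (L' : V → Finset ℕ) : Set V :=
  {v | (v ∈ Sverts ∧ v ∉ Q) ∨ (v = x ∧ (L' x).card < 3)}

/-- The adjacency of the precolored subgraph of the democratic reduction:
`S ∖ V(P)`. -/
def reducedSAdj {V : Type u} (SAdj : V → V → Prop) (Q : List V) : V → V → Prop :=
  fun u v => SAdj u v ∧ u ∉ Q ∧ v ∉ Q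


/-! ### Topological part: logarithmic change along paths -/

/-- `d` is the change of a continuous logarithm of `f` between `0` and `1`. -/
def LogChange (f : ℝ → ℂ) (d : ℂ) : Prop :=
  ∃ g : ℝ → ℂ, Continuous g ∧ (∀ t, Complex.exp (g t) = f t) ∧ g 1 - g 0 = d

theorem LogChange.exists_of {f : ℝ → ℂ} (hf : Continuous f) (h0 : ∀ t, f t ≠ 0) :
    ∃ d, LogChange f d := by
  obtain ⟨F, ⟨-, hF⟩, -⟩ := Complex.isCoveringMapOn_exp.existsUnique_continuousMap_lifts
    (⟨f, hf⟩ : C(ℝ, ℂ)) (a₀ := 0) (Complex.exp_log (h0 0)) (fun x => h0 x)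
  exact ⟨_, F, F.continuous, fun t => congrFun hF t, rfl⟩

theorem LogChange.unique {f : ℝ → ℂ} {d e : ℂ} (h1 : LogChange f d) (h2 : LogChange f e) :
    d = e := by
  obtain ⟨g, hg, hgf, rfl⟩ := h1
  obtain ⟨k, hk, hkf, rfl⟩ := h2
  have := Complex.isCoveringMap_exp.const_of_comp (g := fun t => g t - k t) (hg.sub hk)
    (by
      have h : ∀ a, Complex.exp (g a - k a) = 1 := by
        intro a
        rw [Complex.exp_sub, hgf, hkf, div_self]
        rw [← hgf a]
        exact Complex.exp_ne_zero _
      intro a a'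
      apply Subtype.ext
      simp only [h]) 1 0
  linear_combination this

theorem LogChange.neg {f : ℝ → ℂ} {d : ℂ} (h : LogChange f d) : LogChange (fun t => -f t) d := by
  obtain ⟨g, hg, hgf, rfl⟩ := h
  refine ⟨fun t => g t + Real.pi * Complex.I, by fun_prop, fun t => ?_, by ring⟩
  rw [Complex.exp_add, hgf, Complex.exp_pi_mul_I]
  ring

theorem LogChange.sub_comm {f : ℝ → ℂ} {p d : ℂ} (h : LogChange (fun t => f t - p) d) :
    LogChange (fun t => p - f t) d := by
  simpa using h.neg

theorem LogChange.exp_mul {f : ℝ → ℂ} {d : ℂ} (h : LogChange f d) :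
    Complex.exp d * f 0 = f 1 := by
  obtain ⟨g, hg, hgf, rfl⟩ := h
  rw [← hgf, ← hgf, ← Complex.exp_add]
  ring_nf

theorem LogChange.one_ne_zero {f : ℝ → ℂ} {d : ℂ} (h : LogChange f d) : f 1 ≠ 0 := by
  obtain ⟨g, hg, hgf, rfl⟩ := h
  rw [← hgf]
  exact Complex.exp_ne_zero _

theorem LogChange.square {f h : ℝ → ℂ} (hf : Continuous f) (hh : Continuous h)
    (hne : ∀ s t, f s ≠ h t) {d1 d2 d3 d4 : ℂ}
    (h1 : LogChange (fun t => f t - h 0) d1) (h2 : LogChange (fun t => h t - f 1) d2)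
    (h3 : LogChange (fun t => h t - f 0) d3) (h4 : LogChange (fun t => f t - h 1) d4) :
    d1 + d2 = d3 + d4 := by
  obtain ⟨F, ⟨-, hF⟩, -⟩ := Complex.isCoveringMapOn_exp.existsUnique_continuousMap_lifts
    (⟨fun x => f x.1 - h x.2, by fun_prop⟩ : C(ℝ × ℝ, ℂ)) (a₀ := (0, 0))
    (Complex.exp_log (sub_ne_zero.2 (hne 0 0))) (fun x => sub_ne_zero.2 (hne x.1 x.2))
  have hF' : ∀ s t, Complex.exp (F (s, t)) = f s - h t := fun s t => congrFun hF (s, t)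
  have hFc : Continuous F := F.continuous
  have e1 := h1.unique ⟨fun t => F (t, 0), by fun_prop, fun t => hF' t 0, rfl⟩
  have e2 := h2.sub_comm.unique ⟨fun t => F (1, t), by fun_prop, fun t => hF' 1 t, rfl⟩
  have e3 := h3.sub_comm.unique ⟨fun t => F (0, t), by fun_prop, fun t => hF' 0 t, rfl⟩
  have e4 := h4.unique ⟨fun t => F (t, 1), by fun_prop, fun t => hF' t 1, rfl⟩
  rw [e1, e2, e3, e4]
  ring

theorem LogChange.far {f : ℝ → ℂ} {q : ℂ} (hf : Continuous f) (h : ∀ t, ‖f t‖ < ‖q‖) :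
    LogChange (fun t => f t - q)
      (Complex.log (1 + -(f 1 / q)) - Complex.log (1 + -(f 0 / q))) := by
  have hq : q ≠ 0 := by
    intro h0
    have := h 0
    rw [h0, norm_zero] at this
    exact absurd this (not_lt.2 (norm_nonneg _))
  have hs : ∀ t, 1 + -(f t / q) ∈ Complex.slitPlane := by
    intro t
    apply Complex.mem_slitPlane_of_norm_lt_one
    rw [norm_neg, norm_div, div_lt_one (norm_pos_iff.2 hq)]
    exact h t
  refine ⟨fun t => Complex.log (1 + -(f t / q)) + Complex.log (-q), ?_, fun t => ?_, by ring⟩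
  · refine Continuous.add ?_ continuous_const
    exact Continuous.clog (by fun_prop) hs
  · rw [Complex.exp_add, Complex.exp_log (Complex.slitPlane_ne_zero (hs t)),
      Complex.exp_log (neg_ne_zero.2 hq)]
    field_simp
    ring

theorem LogChange.triangle {f1 f2 f3 δ : ℝ → ℂ} {p d1 d2 d3 : ℂ}
    (c1 : Continuous f1) (c2 : Continuous f2) (c3 : Continuous f3) (cδ : Continuous δ)
    (e13 : f1 0 = f3 0) (e12 : f1 1 = f2 0) (e23 : f2 1 = f3 1) (eδ : δ 0 = p)
    (n1 : ∀ s t, f1 s ≠ δ t) (n2 : ∀ s t, f2 s ≠ δ t) (n3 : ∀ s t, f3 s ≠ δ t)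
    (r1 : ∀ s, ‖f1 s‖ < ‖δ 1‖) (r2 : ∀ s, ‖f2 s‖ < ‖δ 1‖) (r3 : ∀ s, ‖f3 s‖ < ‖δ 1‖)
    (h1 : LogChange (fun t => f1 t - p) d1) (h2 : LogChange (fun t => f2 t - p) d2)
    (h3 : LogChange (fun t => f3 t - p) d3) : d1 + d2 = d3 := by
  subst eδ
  obtain ⟨a, ha⟩ := LogChange.exists_of (f := fun t => δ t - f1 0) (by fun_prop)
    (fun t => sub_ne_zero.2 (n1 0 t).symm)
  obtain ⟨b, hb⟩ := LogChange.exists_of (f := fun t => δ t - f1 1) (by fun_prop)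
    (fun t => sub_ne_zero.2 (n1 1 t).symm)
  obtain ⟨c, hc⟩ := LogChange.exists_of (f := fun t => δ t - f2 1) (by fun_prop)
    (fun t => sub_ne_zero.2 (n2 1 t).symm)
  have s1 := LogChange.square c1 cδ n1 h1 hb ha (LogChange.far c1 r1)
  have s2 := LogChange.square c2 cδ n2 h2 hc (by rw [← e12]; exact hb) (LogChange.far c2 r2)
  have s3 := LogChange.square c3 cδ n3 h3 (by rw [← e23]; exact hc) (by rw [← e13]; exact ha)
    (LogChange.far c3 r3)
  rw [e13, e12] at s1
  rw [e23] at s2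
  linear_combination s1 + s2 - s3

/-- There is no drawing of `K₄` in the plane in which opposite edges are disjoint and every
vertex can be joined to far away points in the complement of the opposite triangle. -/
theorem no_K4_paths {v1 v2 v3 v4 : ℂ}
    (f12 : Path v1 v2) (f13 : Path v1 v3) (f14 : Path v1 v4)
    (f23 : Path v2 v3) (f24 : Path v2 v4) (f34 : Path v3 v4)
    (o1 : Disjoint (Set.range f12) (Set.range f34))
    (o2 : Disjoint (Set.range f13) (Set.range f24))
    (o3 : Disjoint (Set.range f14) (Set.range f23))
    (t1 : ∀ R : ℝ, ∃ w, R < ‖w‖ ∧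
      JoinedIn (Set.range f23 ∪ Set.range f34 ∪ Set.range f24)ᶜ v1 w)
    (t2 : ∀ R : ℝ, ∃ w, R < ‖w‖ ∧
      JoinedIn (Set.range f13 ∪ Set.range f34 ∪ Set.range f14)ᶜ v2 w)
    (t3 : ∀ R : ℝ, ∃ w, R < ‖w‖ ∧
      JoinedIn (Set.range f12 ∪ Set.range f24 ∪ Set.range f14)ᶜ v3 w)
    (t4 : ∀ R : ℝ, ∃ w, R < ‖w‖ ∧
      JoinedIn (Set.range f12 ∪ Set.range f23 ∪ Set.range f13)ᶜ v4 w) : False := by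
  -- the general triangle statement
  have key : ∀ {p a b c : ℂ} (f : Path a b) (g : Path b c) (h : Path a c),
      (∀ R : ℝ, ∃ w, R < ‖w‖ ∧ JoinedIn (Set.range f ∪ Set.range g ∪ Set.range h)ᶜ p w) →
      ∃ d1 d2 d3, LogChange (fun t => f.extend t - p) d1 ∧ LogChange (fun t => g.extend t - p) d2 ∧
        LogChange (fun t => h.extend t - p) d3 ∧ d1 + d2 = d3 := by
    intro p a b c f g h H
    obtain ⟨R, hR⟩ := ((isCompact_range f.continuous).union (isCompact_range g.continuous)).union
      (isCompact_range h.continuous) |>.isBounded.exists_norm_le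
    obtain ⟨w, hw, δ, hδ⟩ := H R
    have mf : ∀ t, f.extend t ∈ Set.range f ∪ Set.range g ∪ Set.range h := fun t =>
      Or.inl (Or.inl (by rw [← f.extend_range]; exact Set.mem_range_self t))
    have mg : ∀ t, g.extend t ∈ Set.range f ∪ Set.range g ∪ Set.range h := fun t =>
      Or.inl (Or.inr (by rw [← g.extend_range]; exact Set.mem_range_self t))
    have mh : ∀ t, h.extend t ∈ Set.range f ∪ Set.range g ∪ Set.range h := fun t =>
      Or.inr (by rw [← h.extend_range]; exact Set.mem_range_self t)
    have mδ : ∀ t, δ.extend t ∈ (Set.range f ∪ Set.range g ∪ Set.range h)ᶜ := by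
      intro t
      have : δ.extend t ∈ Set.range δ := by rw [← δ.extend_range]; exact Set.mem_range_self t
      obtain ⟨s, hs⟩ := this
      rw [← hs]; exact hδ s
    have ne : ∀ x ∈ Set.range f ∪ Set.range g ∪ Set.range h, ∀ t, x ≠ δ.extend t := by
      intro x hx t he
      exact mδ t (he ▸ hx)
    have mp : ∀ x ∈ Set.range f ∪ Set.range g ∪ Set.range h, x - p ≠ 0 := by
      intro x hx
      have := ne x hx 0
      rw [δ.extend_zero] at this
      exact sub_ne_zero.2 this
    have c1 := f.continuous_extend
    have c2 := g.continuous_extend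
    have c3 := h.continuous_extend
    obtain ⟨d1, h1⟩ := LogChange.exists_of (f := fun t => f.extend t - p) (by fun_prop)
      (fun t => mp _ (mf t))
    obtain ⟨d2, h2⟩ := LogChange.exists_of (f := fun t => g.extend t - p) (by fun_prop)
      (fun t => mp _ (mg t))
    obtain ⟨d3, h3⟩ := LogChange.exists_of (f := fun t => h.extend t - p) (by fun_prop)
      (fun t => mp _ (mh t))
    refine ⟨d1, d2, d3, h1, h2, h3, ?_⟩
    refine LogChange.triangle c1 c2 c3 δ.continuous_extend (by simp) (by simp) (by simp) (by simp)
      (fun s t => ne _ (mf s) t) (fun s t => ne _ (mg s) t) (fun s t => ne _ (mh s) t)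
      ?_ ?_ ?_ h1 h2 h3
    all_goals
      intro s
      rw [δ.extend_one]
      refine lt_of_le_of_lt (hR _ ?_) hw
    exacts [mf s, mg s, mh s]
  have sq : ∀ {a b c d d1 d2 d3 d4 : ℂ} (f : Path a b) (h : Path c d),
      Disjoint (Set.range f) (Set.range h) →
      LogChange (fun t => f.extend t - c) d1 → LogChange (fun t => h.extend t - b) d2 →
      LogChange (fun t => h.extend t - a) d3 → LogChange (fun t => f.extend t - d) d4 →
      d1 + d2 = d3 + d4 := by
    intro a b c d d1 d2 d3 d4 f h hd h1 h2 h3 h4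
    refine LogChange.square f.continuous_extend h.continuous_extend ?_ (d1 := d1) (d2 := d2)
      (d3 := d3) (d4 := d4) (by simpa using h1) (by simpa using h2) (by simpa using h3)
      (by simpa using h4)
    intro s t he
    refine (Set.disjoint_left.1 hd : _) (?_ : f.extend s ∈ _) ?_
    · rw [← f.extend_range]; exact Set.mem_range_self s
    · rw [he, ← h.extend_range]; exact Set.mem_range_self t
  obtain ⟨a23, a34, a24, A23, A34, A24, Ea⟩ := key f23 f34 f24 t1
  obtain ⟨b13, b34, b14, B13, B34, B14, Eb⟩ := key f13 f34 f14 t2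
  obtain ⟨c12, c24, c14, C12, C24, C14, Ec⟩ := key f12 f24 f14 t3
  obtain ⟨d12, d23, d13, D12, D23, D13, Ed⟩ := key f12 f23 f13 t4
  have s1 := sq f12 f34 o1 C12 B34 A34 D12
  have s2 := sq f13 f24 o2 B13 C24 A24 D13
  have s3 := sq f14 f23 o3 B14 D23 A23 C14
  have z : a23 + c12 - b13 = 0 := by
    linear_combination (1/2 : ℂ) * (s1 - s2 - s3 + Ea - Eb + Ec + Ed)
  have x1 := A23.exp_mul
  have x2 := C12.exp_mul
  have x3 := B13.exp_mul
  simp only [Path.extend_zero, Path.extend_one] at x1 x2 x3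
  have n13 := A23.one_ne_zero
  have n23 := B13.one_ne_zero
  simp only [Path.extend_one] at n13 n23
  have ee : Complex.exp a23 * Complex.exp c12 = Complex.exp b13 := by
    rw [← Complex.exp_add]
    congr 1
    linear_combination z
  have : (v3 - v2) * (v3 - v1) = 0 := by
    linear_combination (-1/2 : ℂ) * (-(v1 - v3) * x3 + (v2 - v1) * (v1 - v3) * ee
      - Complex.exp c12 * (v1 - v3) * x1 - (v3 - v1) * x2)
  rcases mul_eq_zero.1 this with h | h
  · exact n23 h
  · exact n13 h

/-- Far points can be reached from boundary points of the unbounded components. -/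
theorem reach_far {K T : Set (ℝ × ℝ)} {v : ℝ × ℝ} (hK : IsClosed K) (hT : IsClosed T)
    (hTK : T ⊆ K) (hvT : v ∉ T)
    (hv : v ∈ closure {p | p ∉ K ∧ ¬Bornology.IsBounded (connectedComponentIn Kᶜ p)}) (R : ℝ) :
    ∃ w, R < ‖w‖ ∧ JoinedIn Tᶜ v w := by
  obtain ⟨ε, hε, hball⟩ := Metric.isOpen_iff.1 hT.isOpen_compl v hvT
  obtain ⟨o, ⟨hoK, ho⟩, hd⟩ := Metric.mem_closure_iff.1 hv ε hε
  have hw : ∃ w ∈ connectedComponentIn Kᶜ o, R < ‖w‖ := by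
    by_contra hcon
    push Not at hcon
    exact ho ((isBounded_iff_forall_norm_le).2 ⟨R, hcon⟩)
  obtain ⟨w, hwC, hwR⟩ := hw
  refine ⟨w, hwR, ?_⟩
  have h1 : JoinedIn Tᶜ v o := by
    have hp : IsPathConnected (Metric.ball v ε) :=
      (convex_ball v ε).isPathConnected ⟨v, Metric.mem_ball_self hε⟩
    exact (hp.joinedIn v (Metric.mem_ball_self hε) o
      (by rw [Metric.mem_ball, dist_comm]; exact hd)).mono hball
  have h2 : JoinedIn Tᶜ o w := by
    have hopen : IsOpen (connectedComponentIn Kᶜ o) := hK.isOpen_compl.connectedComponentIn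
    have hconn : IsConnected (connectedComponentIn Kᶜ o) :=
      isConnected_connectedComponentIn_iff.2 hoK
    have hp := (hopen.isConnected_iff_isPathConnected).1 hconn
    refine (hp.joinedIn o (mem_connectedComponentIn hoK) w hwC).mono ?_
    exact (connectedComponentIn_subset _ _).trans (Set.compl_subset_compl.2 hTK)
  exact h1.trans h2

theorem no_K4_plane {v1 v2 v3 v4 : ℝ × ℝ} {S12 S13 S14 S23 S24 S34 K : Set (ℝ × ℝ)}
    (hK : IsClosed K)
    (j12 : JoinedIn S12 v1 v2) (j13 : JoinedIn S13 v1 v3) (j14 : JoinedIn S14 v1 v4)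
    (j23 : JoinedIn S23 v2 v3) (j24 : JoinedIn S24 v2 v4) (j34 : JoinedIn S34 v3 v4)
    (k12 : S12 ⊆ K) (k13 : S13 ⊆ K) (k14 : S14 ⊆ K) (k23 : S23 ⊆ K) (k24 : S24 ⊆ K)
    (k34 : S34 ⊆ K)
    (o1 : Disjoint S12 S34) (o2 : Disjoint S13 S24) (o3 : Disjoint S14 S23)
    (n1 : v1 ∉ S23 ∪ S34 ∪ S24) (n2 : v2 ∉ S13 ∪ S34 ∪ S14) (n3 : v3 ∉ S12 ∪ S24 ∪ S14)
    (n4 : v4 ∉ S12 ∪ S23 ∪ S13)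
    (hv : ∀ v ∈ ({v1, v2, v3, v4} : Set (ℝ × ℝ)),
      v ∈ closure {p | p ∉ K ∧ ¬Bornology.IsBounded (connectedComponentIn Kᶜ p)}) : False := by
  obtain ⟨f12, h12⟩ := j12
  obtain ⟨f13, h13⟩ := j13
  obtain ⟨f14, h14⟩ := j14
  obtain ⟨f23, h23⟩ := j23
  obtain ⟨f24, h24⟩ := j24
  obtain ⟨f34, h34⟩ := j34
  have r12 : Set.range f12 ⊆ S12 := Set.range_subset_iff.2 h12
  have r13 : Set.range f13 ⊆ S13 := Set.range_subset_iff.2 h13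
  have r14 : Set.range f14 ⊆ S14 := Set.range_subset_iff.2 h14
  have r23 : Set.range f23 ⊆ S23 := Set.range_subset_iff.2 h23
  have r24 : Set.range f24 ⊆ S24 := Set.range_subset_iff.2 h24
  have r34 : Set.range f34 ⊆ S34 := Set.range_subset_iff.2 h34
  let e : ℝ × ℝ → ℂ := Complex.equivRealProdCLM.symm
  have he : Continuous e := Complex.equivRealProdCLM.symm.continuous
  have hinj : Function.Injective e := Complex.equivRealProdCLM.symm.injective
  have hnorm : ∀ w, ‖w‖ ≤ ‖e w‖ := by
    intro w
    rw [Prod.norm_def]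
    refine max_le ?_ ?_
    · exact Complex.abs_re_le_norm (e w)
    · exact Complex.abs_im_le_norm (e w)
  have hrange : ∀ {a b : ℝ × ℝ} (f : Path a b), Set.range (f.map he) = e '' Set.range f := by
    intro a b f
    rw [Path.map_coe, Set.range_comp]
  have far : ∀ {a b c v : ℝ × ℝ} (f : Path a b) (g : Path b c) (h : Path a c)
      {A B D : Set (ℝ × ℝ)}, Set.range f ⊆ A → Set.range g ⊆ B → Set.range h ⊆ D →
      A ⊆ K → B ⊆ K → D ⊆ K → v ∉ A ∪ B ∪ D →
      v ∈ closure {p | p ∉ K ∧ ¬Bornology.IsBounded (connectedComponentIn Kᶜ p)} →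
      ∀ R : ℝ, ∃ w, R < ‖w‖ ∧ JoinedIn (Set.range (f.map he) ∪ Set.range (g.map he) ∪
        Set.range (h.map he))ᶜ (e v) w := by
    intro a b c v f g h A B D hA hB hD kA kB kD hn hcl R
    have hT : IsClosed (Set.range f ∪ Set.range g ∪ Set.range h) :=
      (((isCompact_range f.continuous).union (isCompact_range g.continuous)).union
        (isCompact_range h.continuous)).isClosed
    obtain ⟨w, hw, γ, hγ⟩ := reach_far hK hT
      (Set.union_subset (Set.union_subset (hA.trans kA) (hB.trans kB)) (hD.trans kD))
      (fun hmem => hn (Set.union_subset_union (Set.union_subset_union hA hB) hD hmem)) hcl R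
    refine ⟨e w, lt_of_lt_of_le hw (hnorm w), γ.map he, ?_⟩
    intro t
    rw [hrange, hrange, hrange, ← Set.image_union, ← Set.image_union]
    rintro ⟨x, hx, hxe⟩
    have : x = γ t := hinj hxe
    exact hγ t (this ▸ hx)
  have dis : ∀ {a b c d : ℝ × ℝ} (f : Path a b) (g : Path c d) {A B : Set (ℝ × ℝ)},
      Set.range f ⊆ A → Set.range g ⊆ B → Disjoint A B →
      Disjoint (Set.range (f.map he)) (Set.range (g.map he)) := by
    intro a b c d f g A B hA hB hd
    rw [hrange, hrange]
    exact (Set.disjoint_image_iff hinj).2 (hd.mono hA hB)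
  exact no_K4_paths (f12.map he) (f13.map he) (f14.map he) (f23.map he) (f24.map he) (f34.map he)
    (dis _ _ r12 r34 o1) (dis _ _ r13 r24 o2) (dis _ _ r14 r23 o3)
    (far _ _ _ r23 r34 r24 k23 k34 k24 n1 (hv _ (by simp)))
    (far _ _ _ r13 r34 r14 k13 k34 k14 n2 (hv _ (by simp)))
    (far _ _ _ r12 r24 r14 k12 k24 k14 n3 (hv _ (by simp)))
    (far _ _ _ r12 r23 r13 k12 k23 k13 n4 (hv _ (by simp)))

namespace PlaneGraph

variable {V : Type u}

/-- The part of the drawing spanned by a set of vertices. -/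
def draw (G : PlaneGraph V) (Y : Set V) : Set (ℝ × ℝ) :=
  G.pos '' Y ∪ {x | ∃ u ∈ Y, ∃ v ∈ Y, G.Adj u v ∧ x ∈ G.arc s(u, v)}

theorem draw_subset_image (G : PlaneGraph V) {Y : Set V} (hY : Y ⊆ G.verts) :
    G.draw Y ⊆ G.image := by
  rintro x (hx | ⟨u, hu, v, hv, ha, hx⟩)
  · exact Or.inl (Set.image_mono hY hx)
  · refine Or.inr ?_
    simp only [Set.mem_iUnion]
    exact ⟨u, v, ha, hx⟩

theorem draw_mono (G : PlaneGraph V) {Y Z : Set V} (h : Y ⊆ Z) : G.draw Y ⊆ G.draw Z := by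
  rintro x (hx | ⟨u, hu, v, hv, ha, hx⟩)
  · exact Or.inl (Set.image_mono h hx)
  · exact Or.inr ⟨u, h hu, v, h hv, ha, hx⟩

theorem draw_disjoint (G : PlaneGraph V) {Y Z : Set V} (hY : Y ⊆ G.verts) (hZ : Z ⊆ G.verts)
    (h : Disjoint Y Z) : Disjoint (G.draw Y) (G.draw Z) := by
  have hd : ∀ {a}, a ∈ Y → a ∈ Z → False := fun ha hb => Set.disjoint_left.1 h ha hb
  rw [Set.disjoint_left]
  rintro x (⟨y, hy, rfl⟩ | ⟨u, hu, v, hv, ha, hx⟩) (⟨z, hz, hzx⟩ | ⟨u', hu', v', hv', ha', hx'⟩)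
  · have := G.pos_injOn (hZ hz) (hY hy) hzx
    exact hd hy (this ▸ hz)
  · rcases G.arc_avoid u' v' ha' y (hY hy) hx' with rfl | rfl
    · exact hd hy hu'
    · exact hd hy hv'
  · rcases G.arc_avoid u v ha z (hZ hz) (hzx ▸ hx) with rfl | rfl
    · exact hd hu hz
    · exact hd hv hz
  · have hne : s(u, v) ≠ s(u', v') := by
      intro he
      rw [Sym2.eq_iff] at he
      rcases he with ⟨rfl, rfl⟩ | ⟨rfl, rfl⟩
      · exact hd hu hu'
      · exact hd hu hv'
    obtain ⟨w, ⟨hw, hw'⟩, -⟩ := G.arc_meet u v u' v' ha ha' hne ⟨hx, hx'⟩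
    have h1 : w ∈ Y := by rcases hw with rfl | rfl <;> assumption
    have h2 : w ∈ Z := by rcases hw' with rfl | rfl <;> assumption
    exact hd h1 h2

theorem isClosed_image (G : PlaneGraph V) : IsClosed G.image := by
  have h1 : IsCompact (G.pos '' G.verts) := (G.finite_verts.image _).isCompact
  have h2 : IsCompact (⋃ x ∈ {x : V × V | G.Adj x.1 x.2}, G.arc s(x.1, x.2)) := by
    have hfin : {x : V × V | G.Adj x.1 x.2}.Finite :=
      (G.finite_verts.prod G.finite_verts).subset
        (fun x hx => ⟨G.adj_mem _ _ hx, G.adj_mem _ _ (G.adj_symm _ _ hx)⟩)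
    refine hfin.isCompact_biUnion ?_
    intro x hx
    obtain ⟨f, hf, -, hfi, -, -⟩ := G.arc_arc _ _ hx
    rw [← hfi]
    exact isCompact_Icc.image_of_continuousOn hf
  have : G.image = G.pos '' G.verts ∪ ⋃ x ∈ {x : V × V | G.Adj x.1 x.2}, G.arc s(x.1, x.2) := by
    ext x
    simp [image]
  rw [this]
  exact (h1.union h2).isClosed

theorem joinedIn_adj (G : PlaneGraph V) {Y : Set V} {u v : V} (h : G.Adj u v) (hu : u ∈ Y)
    (hv : v ∈ Y) : JoinedIn (G.draw Y) (G.pos u) (G.pos v) := by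
  obtain ⟨f, hf, -, hfi, h0, h1⟩ := G.arc_arc _ _ h
  refine JoinedIn.ofLine hf h0 h1 ?_
  rw [hfi]
  intro x hx
  exact Or.inr ⟨u, hu, v, hv, h, hx⟩

/-- `x` and `y` are joined inside `Y`. -/
def Link (G : PlaneGraph V) (Y : Set V) : V → V → Prop :=
  Relation.ReflTransGen (fun u v => G.Adj u v ∧ u ∈ Y ∧ v ∈ Y)

theorem Link.symm {G : PlaneGraph V} {Y : Set V} {x y : V} (h : G.Link Y x y) :
    G.Link Y y x := by
  induction h with
  | refl => exact Relation.ReflTransGen.refl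
  | tail _ hbc ih => exact Relation.ReflTransGen.head ⟨G.adj_symm _ _ hbc.1, hbc.2.2, hbc.2.1⟩ ih

theorem Link.mono {G H : PlaneGraph V} {Y Z : Set V} {x y : V} (h : G.Link Y x y)
    (hGH : ∀ u v, G.Adj u v → H.Adj u v) (hYZ : Y ⊆ Z) : H.Link Z x y :=
  Relation.ReflTransGen.mono (fun _ _ h => ⟨hGH _ _ h.1, hYZ h.2.1, hYZ h.2.2⟩) _ _ h

theorem Link.joinedIn {G : PlaneGraph V} {Y : Set V} {x y : V} (h : G.Link Y x y)
    (hx : x ∈ Y) : JoinedIn (G.draw Y) (G.pos x) (G.pos y) := by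
  induction h with
  | refl => exact JoinedIn.refl (Or.inl ⟨x, hx, rfl⟩)
  | tail _ hbc ih => exact ih.trans (G.joinedIn_adj hbc.1 hbc.2.1 hbc.2.2)

/-- `Y` is connected, and `r` is one of its vertices. -/
def Rooted (G : PlaneGraph V) (Y : Set V) (r : V) : Prop :=
  r ∈ Y ∧ ∀ y ∈ Y, G.Link Y r y

/-- An outer-planar drawing has no `K₄` minor (three of the branch sets are singletons). -/
theorem no_K4 (G : PlaneGraph V) {a b c x y1 y2 y3 : V} {Y : Set V} (hY : Y ⊆ G.verts)
    (hx : G.Rooted Y x) (ha : a ∉ Y) (hb : b ∉ Y) (hc : c ∉ Y)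
    (hab : G.Adj a b) (hac : G.Adj a c) (hbc : G.Adj b c)
    (hy1 : y1 ∈ Y) (hy2 : y2 ∈ Y) (hy3 : y3 ∈ Y)
    (h1 : G.Adj y1 a) (h2 : G.Adj y2 b) (h3 : G.Adj y3 c)
    (oa : G.OnOuter a) (ob : G.OnOuter b) (oc : G.OnOuter c) (ox : G.OnOuter x) : False := by
  have va := G.adj_mem _ _ hab
  have vb := G.adj_mem _ _ hbc
  have vc := G.adj_mem _ _ (G.adj_symm _ _ hbc)
  have nab : a ≠ b := fun h => G.adj_irrefl b (h ▸ hab)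
  have nac : a ≠ c := fun h => G.adj_irrefl c (h ▸ hac)
  have nbc : b ≠ c := fun h => G.adj_irrefl c (h ▸ hbc)
  have nY : ∀ {d}, d ∉ Y → ∀ {y}, y ∈ Y → y ≠ d := fun hd _ hy h => hd (h ▸ hy)
  have sub2 : ∀ {d e}, d ∈ G.verts → e ∈ G.verts → ({d, e} : Set V) ⊆ G.verts := by
    rintro d e hd he w (rfl | rfl) <;> assumption
  have subY : ∀ {d}, d ∈ G.verts → insert d Y ⊆ G.verts := fun hd => Set.insert_subset hd hY
  have jY : ∀ {d y}, y ∈ Y → G.Adj y d → JoinedIn (G.draw (insert d Y)) (G.pos d) (G.pos x) := by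
    intro d y hy hyd
    have l := (hx.2 y hy).mono (fun _ _ h => h) (Set.subset_insert d Y)
    have := l.joinedIn (Set.mem_insert_of_mem d hx.1)
    exact (this.trans (G.joinedIn_adj hyd (Set.mem_insert_of_mem d hy)
      (Set.mem_insert d Y))).symm
  have dis : ∀ {d e f}, d ∈ G.verts → e ∈ G.verts → f ∈ G.verts → d ∉ Y → e ∉ Y → d ≠ f → e ≠ f →
      Disjoint (G.draw {d, e}) (G.draw (insert f Y)) := by
    intro d e f hd he hf hdY heY hdf hef
    refine G.draw_disjoint (sub2 hd he) (subY hf) ?_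
    rw [Set.disjoint_left]
    rintro w (rfl | rfl) (h | h)
    exacts [hdf h, hdY h, hef h, heY h]
  have notin : ∀ {d Z}, d ∈ G.verts → Z ⊆ G.verts → d ∉ Z → G.pos d ∉ G.draw Z := by
    intro d Z hd hZ hdZ hmem
    refine Set.disjoint_left.1 (G.draw_disjoint (Y := {d}) (by simpa using hd) hZ
      (Set.disjoint_singleton_left.2 hdZ)) (Or.inl ⟨d, rfl, rfl⟩) hmem
  refine no_K4_plane (v1 := G.pos a) (v2 := G.pos b) (v3 := G.pos c) (v4 := G.pos x)
    (S12 := G.draw {a, b}) (S13 := G.draw {a, c}) (S14 := G.draw (insert a Y))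
    (S23 := G.draw {b, c}) (S24 := G.draw (insert b Y)) (S34 := G.draw (insert c Y))
    G.isClosed_image (G.joinedIn_adj hab (by simp) (by simp))
    (G.joinedIn_adj hac (by simp) (by simp)) (jY hy1 h1)
    (G.joinedIn_adj hbc (by simp) (by simp)) (jY hy2 h2) (jY hy3 h3)
    (G.draw_subset_image (sub2 va vb)) (G.draw_subset_image (sub2 va vc))
    (G.draw_subset_image (subY va)) (G.draw_subset_image (sub2 vb vc))
    (G.draw_subset_image (subY vb)) (G.draw_subset_image (subY vc))
    (dis va vb vc ha hb nac nbc) (dis va vc vb ha hc nab nbc.symm)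
    (dis vb vc va hb hc nab.symm nac.symm).symm ?_ ?_ ?_ ?_ ?_
  · rintro ((h | h) | h)
    · exact notin va (sub2 vb vc) (by simp [nab, nac]) h
    · exact notin va (subY vc) (by simp [nac, ha]) h
    · exact notin va (subY vb) (by simp [nab, ha]) h
  · rintro ((h | h) | h)
    · exact notin vb (sub2 va vc) (by simp [nab.symm, nbc]) h
    · exact notin vb (subY vc) (by simp [nbc, hb]) h
    · exact notin vb (subY va) (by simp [nab.symm, hb]) h
  · rintro ((h | h) | h)
    · exact notin vc (sub2 va vb) (by simp [nac.symm, nbc.symm]) h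
    · exact notin vc (subY vb) (by simp [nbc.symm, hc]) h
    · exact notin vc (subY va) (by simp [nac.symm, hc]) h
  · have xa := nY ha hx.1
    have xb := nY hb hx.1
    have xc := nY hc hx.1
    rintro ((h | h) | h)
    · exact notin (hY hx.1) (sub2 va vb) (by simp [xa, xb]) h
    · exact notin (hY hx.1) (sub2 vb vc) (by simp [xb, xc]) h
    · exact notin (hY hx.1) (sub2 va vc) (by simp [xa, xc]) h
  · rintro v (rfl | rfl | rfl | rfl)
    exacts [oa.1, ob.1, oc.1, ox.1]

end PlaneGraph

/-! ### Structure of harmonicas -/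

section Structure

variable {V : Type u}

theorem IsCanvas.onOuter_of_card {G : PlaneGraph V} {S : Set V} {A : V → V → Prop}
    {L : V → Finset ℕ} (h : IsCanvas G S A L) {v : V} (hv : v ∈ G.verts) (hc : (L v).card ≤ 3) :
    G.OnOuter v := by
  by_contra hcon
  have := h.card_inner v hv hcon
  omega

theorem PlaneGraph.adj_ne {G : PlaneGraph V} {a b : V} (h : G.Adj a b) : a ≠ b :=
  fun e => G.adj_irrefl b (e ▸ h)

theorem PlaneGraph.adj_mem' {G : PlaneGraph V} {a b : V} (h : G.Adj a b) : b ∈ G.verts :=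
  G.adj_mem _ _ (G.adj_symm _ _ h)

theorem PlaneGraph.onOuter_of_edge {G : PlaneGraph V} {a b : V} (h : G.Adj a b)
    (ho : G.EdgeOnOuter a b) : G.OnOuter a ∧ G.OnOuter b := by
  obtain ⟨f, -, -, hi, h0, h1⟩ := G.arc_arc a b h
  constructor
  · refine ho ?_
    rw [← hi, ← h0]
    exact ⟨0, by simp, rfl⟩
  · refine ho ?_
    rw [← hi, ← h1]
    exact ⟨1, by simp, rfl⟩

theorem PlaneGraph.Rooted.single (G : PlaneGraph V) (a : V) : G.Rooted {a} a := by
  refine ⟨rfl, ?_⟩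
  rintro y rfl
  exact Relation.ReflTransGen.refl

/-- Adding a new vertex adjacent to a rooted set. -/
theorem PlaneGraph.Rooted.insert' {G : PlaneGraph V} {Y : Set V} {r a y : V}
    (h : G.Rooted Y r) (hy : y ∈ Y) (hya : G.Adj y a) : G.Rooted (insert a Y) r := by
  refine ⟨Or.inr h.1, ?_⟩
  rintro x (rfl | hx)
  · exact ((h.2 y hy).mono (fun _ _ h => h) (Set.subset_insert _ _)).tail
      ⟨hya, Or.inr hy, Or.inl rfl⟩
  · exact (h.2 x hx).mono (fun _ _ h => h) (Set.subset_insert _ _)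

theorem PlaneGraph.Rooted.reroot {G : PlaneGraph V} {Y : Set V} {r a : V}
    (h : G.Rooted Y r) (ha : a ∈ Y) : G.Rooted Y a :=
  ⟨ha, fun y hy => (h.2 a ha).symm.trans (h.2 y hy)⟩

theorem PlaneGraph.Rooted.congr {G H : PlaneGraph V} {Y Z : Set V} {r : V}
    (h : G.Rooted Y r) (hGH : ∀ u v, G.Adj u v → H.Adj u v) (hYZ : Y = Z) : H.Rooted Z r := by
  subst hYZ
  exact ⟨h.1, fun y hy => (h.2 y hy).mono hGH subset_rfl⟩

/-- Structure behind a democracy. -/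
def DemStr (G : PlaneGraph V) (L : V → Finset ℕ) (p1 p2 : V) : Prop :=
  G.verts = {p1, p2} ∨ ∃ z, G.Rooted (G.verts \ {p1, p2}) z ∧ G.Adj z p1 ∧ G.Adj z p2 ∧
    (L z).card ≤ 3

theorem DemStr.symm {G : PlaneGraph V} {L : V → Finset ℕ} {p1 p2 : V} (h : DemStr G L p1 p2) :
    DemStr G L p2 p1 := by
  unfold DemStr at *
  rw [Set.pair_comm p2 p1]
  rcases h with h | ⟨z, h1, h2, h3, h4⟩
  · exact Or.inl h
  · exact Or.inr ⟨z, h1, h3, h2, h4⟩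

/-- Structure behind a dictatorship with dictator `z`. -/
def DictStr (G : PlaneGraph V) (L : V → Finset ℕ) (z w q1 q2 : V) : Prop :=
  G.verts = {z, w} ∨
  (∃ q, q ≠ z ∧ q ≠ w ∧ G.verts = {z, w, q} ∧ G.Adj z q ∧ (q = q1 ∨ q = q2) ∧ w ≠ q1 ∧ w ≠ q2) ∨
  (∃ x, G.Rooted (G.verts \ {z, w}) x ∧ G.Adj x z ∧ G.Adj x w ∧ (L x).card ≤ 3) ∨
  (∃ u1 u2, w ≠ q1 ∧ w ≠ q2 ∧ u1 ≠ w ∧ u2 ≠ w ∧ G.Adj z u1 ∧ G.Adj z u2 ∧ G.Adj u1 u2 ∧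
    (L u1).card ≤ 3 ∧ (L u2).card ≤ 3 ∧
    (G.verts = {z, w, u1, u2} ∨ ∃ x, G.Rooted (G.verts \ {z, w, u1, u2}) x ∧ G.Adj x u1 ∧
      G.Adj x u2 ∧ (L x).card ≤ 3))

/-- In the last case of `DictStr`, everything apart from the first edge is connected. -/
theorem rooted_of_last {G : PlaneGraph V} {z w u1 u2 : V}
    (n1 : u1 ≠ w) (n2 : u2 ≠ w) (a1 : G.Adj z u1) (a2 : G.Adj z u2) (a12 : G.Adj u1 u2)
    (h : G.verts = {z, w, u1, u2} ∨ ∃ x, G.Rooted (G.verts \ {z, w, u1, u2}) x ∧ G.Adj x u1 ∧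
      G.Adj x u2) : G.Rooted (G.verts \ {z, w}) u1 := by
  have e1 := PlaneGraph.adj_ne a1
  have e2 := PlaneGraph.adj_ne a2
  rcases h with h | ⟨x, hr, b1, b2⟩
  · refine ((PlaneGraph.Rooted.single G u1).insert' rfl a12).congr (fun _ _ h => h) ?_
    rw [h]
    ext v
    simp only [Set.mem_insert_iff, Set.mem_singleton_iff, Set.mem_sdiff]
    grind
  · have := (hr.insert' hr.1 b2).insert' (a := u1) (Or.inr hr.1) b1
    refine (this.reroot (Or.inl rfl)).congr (fun _ _ h => h) ?_
    have v1 := PlaneGraph.adj_mem' a1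
    have v2 := PlaneGraph.adj_mem' a2
    ext v
    simp only [Set.mem_insert_iff, Set.mem_singleton_iff, Set.mem_sdiff]
    grind

theorem DictStr.rooted {G : PlaneGraph V} {L : V → Finset ℕ} {z w q1 q2 : V}
    (h : DictStr G L z w q1 q2) (hz : z ∈ G.verts) (hzw : z ≠ w) :
    G.Rooted (G.verts \ {w}) z := by
  rcases h with h | ⟨q, hqz, hqw, hv, ha, -⟩ | ⟨x, hr, ha, -⟩ |
    ⟨u1, u2, -, -, n1, n2, a1, a2, a12, -, -, h⟩
  · refine (PlaneGraph.Rooted.single G z).congr (fun _ _ h => h) ?_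
    rw [h]
    ext v
    simp only [Set.mem_insert_iff, Set.mem_singleton_iff, Set.mem_sdiff]
    grind
  · refine ((PlaneGraph.Rooted.single G z).insert' rfl ha).congr (fun _ _ h => h) ?_
    rw [hv]
    ext v
    simp only [Set.mem_insert_iff, Set.mem_singleton_iff, Set.mem_sdiff]
    grind
  · refine ((hr.insert' hr.1 ha).reroot (Or.inl rfl)).congr (fun _ _ h => h) ?_
    ext v
    simp only [Set.mem_insert_iff, Set.mem_singleton_iff, Set.mem_sdiff]
    grind
  · have hr := rooted_of_last n1 n2 a1 a2 a12
      (h.imp id (fun ⟨x, h1, h2, h3, _⟩ => ⟨x, h1, h2, h3⟩))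
    refine ((hr.insert' hr.1 (G.adj_symm _ _ a1)).reroot (Or.inl rfl)).congr (fun _ _ h => h) ?_
    ext v
    simp only [Set.mem_insert_iff, Set.mem_singleton_iff, Set.mem_sdiff]
    grind

theorem dictStr_same {G : PlaneGraph V} {L : V → Finset ℕ} {z w u q1 q2 : V}
    (hzw : G.Adj z w) (hzu : G.Adj z u) (hwu : G.Adj w u) (hL : (L u).card ≤ 3)
    (h : DemStr (G.deleteVerts {z}) L w u) : DictStr G L z w q1 q2 := by
  refine Or.inr (Or.inr (Or.inl ⟨u, ?_, G.adj_symm _ _ hzu, G.adj_symm _ _ hwu, hL⟩))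
  have e1 := PlaneGraph.adj_ne hzw
  have e2 := PlaneGraph.adj_ne hzu
  have e3 := PlaneGraph.adj_ne hwu
  have vw := PlaneGraph.adj_mem' hzw
  have vu := PlaneGraph.adj_mem' hzu
  rcases h with h | ⟨x, hr, b1, b2, -⟩
  · refine (PlaneGraph.Rooted.single G u).congr (fun _ _ h => h) ?_
    have h' : ∀ v, v ∈ G.verts \ {z} ↔ v ∈ ({w, u} : Set V) := fun v => by
      rw [← h]; rfl
    ext v
    have := h' v
    simp only [Set.mem_insert_iff, Set.mem_singleton_iff, Set.mem_sdiff] at this ⊢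
    grind
  · refine ((hr.insert' hr.1 b2).reroot (Or.inl rfl)).congr (fun _ _ h => h.1) ?_
    change insert u ((G.verts \ {z}) \ {w, u}) = _
    ext v
    simp only [Set.mem_insert_iff, Set.mem_singleton_iff, Set.mem_sdiff]
    grind

theorem dictStr_diff {G : PlaneGraph V} {L : V → Finset ℕ} {z w u1 u2 q1 q2 : V}
    (hzw : G.Adj z w) (hzu1 : G.Adj z u1) (hzu2 : G.Adj z u2) (hu : G.Adj u1 u2)
    (n1 : u1 ≠ w) (n2 : u2 ≠ w) (hL1 : (L u1).card ≤ 3) (hL2 : (L u2).card ≤ 3)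
    (hq1 : w ≠ q1) (hq2 : w ≠ q2)
    (h : DemStr (G.deleteVerts {z, w}) L u1 u2) : DictStr G L z w q1 q2 := by
  refine Or.inr (Or.inr (Or.inr ⟨u1, u2, hq1, hq2, n1, n2, hzu1, hzu2, hu, hL1, hL2, ?_⟩))
  have e1 := PlaneGraph.adj_ne hzw
  have e2 := PlaneGraph.adj_ne hzu1
  have e3 := PlaneGraph.adj_ne hzu2
  have vw := PlaneGraph.adj_mem' hzw
  have vz := G.adj_mem _ _ hzw
  have vu1 := PlaneGraph.adj_mem' hzu1
  have vu2 := PlaneGraph.adj_mem' hzu2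
  rcases h with h | ⟨x, hr, b1, b2, h3⟩
  · left
    have h' : ∀ v, v ∈ G.verts \ {z, w} ↔ v ∈ ({u1, u2} : Set V) := fun v => by
      rw [← h]; rfl
    ext v
    have := h' v
    simp only [Set.mem_insert_iff, Set.mem_singleton_iff, Set.mem_sdiff] at this ⊢
    grind
  · right
    refine ⟨x, hr.congr (fun _ _ h => h.1) ?_, b1.1, b2.1, h3⟩
    change (G.verts \ {z, w}) \ {u1, u2} = _
    ext v
    simp only [Set.mem_insert_iff, Set.mem_singleton_iff, Set.mem_sdiff]
    grind

theorem not_dem_of_dict {C : Set (ℕ × ℕ)} (h : IsDictatorship C) : ¬IsDemocracy C := by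
  rintro ⟨x, y, hxy, rfl⟩
  rcases h.2 with ⟨a, ha⟩ | ⟨a, ha⟩
  · have h1 := ha (x, y) (by simp)
    have h2 := ha (y, x) (by simp)
    simp only at h1 h2
    exact hxy (h1.trans h2.symm)
  · have h1 := ha (x, y) (by simp)
    have h2 := ha (y, x) (by simp)
    simp only at h1 h2
    exact hxy (h2.trans h1.symm)

theorem not_both_dict {C : Set (ℕ × ℕ)} (h : IsDictatorship C) (h1 : ∃ a, ∀ c ∈ C, c.1 = a)
    (h2 : ∃ a, ∀ c ∈ C, c.2 = a) : False := by
  obtain ⟨⟨c, hc, d, hd, hcd⟩, -⟩ := h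
  obtain ⟨a, ha⟩ := h1
  obtain ⟨b, hb⟩ := h2
  exact hcd (Prod.ext ((ha c hc).trans (ha d hd).symm) ((hb c hc).trans (hb d hd).symm))

/-- The structural information carried by a harmonica. -/
structure Str (L : V → Finset ℕ) (G : PlaneGraph V) (p1 p2 q1 q2 : V) (C : Set (ℕ × ℕ)) :
    Prop where
  adj : G.Adj p1 p2
  q1_mem : q1 ∈ G.verts
  q2_mem : q2 ∈ G.verts
  dem : IsDemocracy C → DemStr G L p1 p2
  dict1 : IsDictatorship C → (∃ a, ∀ c ∈ C, c.1 = a) → DictStr G L p1 p2 q1 q2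
  dict2 : IsDictatorship C → (∃ a, ∀ c ∈ C, c.2 = a) → DictStr G L p2 p1 q1 q2

theorem IsPathCanvas.adj {G : PlaneGraph V} {L : V → Finset ℕ} {p1 p2 : V}
    (h : IsPathCanvas G p1 p2 L) : G.Adj p1 p2 :=
  h.2.sadj_sub _ _ (Or.inl ⟨rfl, rfl⟩)

/-- The structure of a dictatorship obtained from a triangle. -/
theorem dictStr_triangle {G : PlaneGraph V} {L : V → Finset ℕ} {z w u1 u2 q1 q2 : V} {c : ℕ}
    {L0 : Finset ℕ} (hL0 : L0.card = 2) (hzw : G.Adj z w)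
    (hzu1 : G.Adj z u1) (hzu2 : G.Adj z u2) (hu : G.Adj u1 u2)
    (hL1 : u1 ≠ w → L u1 = L0 ∪ {c}) (hL2 : u2 ≠ w → L u2 = L0 ∪ {c})
    (hq1 : q1 ∈ (G.deleteVerts ({z, w} \ {u1, u2})).verts)
    (hq2 : q2 ∈ (G.deleteVerts ({z, w} \ {u1, u2})).verts)
    (h : DemStr (G.deleteVerts ({z, w} \ {u1, u2})) L u1 u2) : DictStr G L z w q1 q2 := by
  have e1 := PlaneGraph.adj_ne hzw
  have e2 := PlaneGraph.adj_ne hzu1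
  have e3 := PlaneGraph.adj_ne hzu2
  have e4 := PlaneGraph.adj_ne hu
  have hcard : (L0 ∪ {c}).card ≤ 3 := by
    have := Finset.card_union_le L0 {c}
    simp only [Finset.card_singleton] at this
    omega
  by_cases h1 : u1 = w
  · subst h1
    have hs : (({z, u1} : Set V) \ {u1, u2}) = {z} := by
      ext v
      simp only [Set.mem_insert_iff, Set.mem_singleton_iff, Set.mem_sdiff]
      grind
    rw [hs] at h
    exact dictStr_same hzw hzu2 hu (by rw [hL2 e4.symm]; exact hcard) h
  by_cases h2 : u2 = w
  · subst h2
    have hs : (({z, u2} : Set V) \ {u1, u2}) = {z} := by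
      ext v
      simp only [Set.mem_insert_iff, Set.mem_singleton_iff, Set.mem_sdiff]
      grind
    rw [hs] at h
    exact dictStr_same hzw hzu1 (G.adj_symm _ _ hu) (by rw [hL1 e4]; exact hcard) h.symm
  have hs : (({z, w} : Set V) \ {u1, u2}) = {z, w} := by
    ext v
    simp only [Set.mem_insert_iff, Set.mem_singleton_iff, Set.mem_sdiff]
    grind
  rw [hs] at h hq1 hq2
  have n1 : w ≠ q1 := by
    rintro rfl
    exact hq1.2 (by simp)
  have n2 : w ≠ q2 := by
    rintro rfl
    exact hq2.2 (by simp)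
  exact dictStr_diff hzw hzu1 hzu2 hu h1 h2 (by rw [hL1 h1]; exact hcard)
    (by rw [hL2 h2]; exact hcard) n1 n2 h

theorem dictStr_cherry {G : PlaneGraph V} {L : V → Finset ℕ} {z w q1 q2 : V}
    (hzw : z ≠ w) (hq : q1 ≠ q2) (hqadj : G.Adj q1 q2) (hverts : G.verts = {z, w, q1, q2})
    (hz : (({z, w} : Set V) ∩ ({q1, q2} : Set V)) = {z}) :
    DictStr G L z w q1 q2 := by
  have hzq : z ∈ ({q1, q2} : Set V) := by
    have : z ∈ (({z, w} : Set V) ∩ ({q1, q2} : Set V)) := by rw [hz]; rfl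
    exact this.2
  have hwq : w ∉ ({q1, q2} : Set V) := by
    intro hw
    have : w ∈ (({z, w} : Set V) ∩ ({q1, q2} : Set V)) := ⟨by simp, hw⟩
    rw [hz] at this
    exact hzw this.symm
  simp only [Set.mem_insert_iff, Set.mem_singleton_iff, not_or] at hzq hwq
  refine Or.inr (Or.inl ?_)
  rcases hzq with rfl | rfl
  · refine ⟨q2, hq.symm, fun h => hwq.2 h.symm, ?_, hqadj, Or.inr rfl, hwq.1, hwq.2⟩
    rw [hverts]
    ext v
    simp only [Set.mem_insert_iff, Set.mem_singleton_iff]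
    grind
  · refine ⟨q1, hq, fun h => hwq.1 h.symm, ?_, G.adj_symm _ _ hqadj, Or.inl rfl, hwq.1, hwq.2⟩
    rw [hverts]
    ext v
    simp only [Set.mem_insert_iff, Set.mem_singleton_iff]
    grind

theorem demStr_of_rec {G : PlaneGraph V} {L : V → Finset ℕ} {p1 p2 q1 q2 z : V} {a b c : ℕ}
    {L0 : Finset ℕ} (hz1 : G.Adj z p1) (hz2 : G.Adj z p2)
    (hLz : L z = L0 ∪ {c}) (hab : a ≠ b) (hL0ab : (L0 : Set ℕ) = {a, b})
    (h : Str L (G.deleteVerts {p1}) z p2 q1 q2 {(c, a), (c, b)}) : DemStr G L p1 p2 := by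
  have hd : IsDictatorship {(c, a), (c, b)} :=
    ⟨⟨(c, a), by simp, (c, b), by simp, by simpa using hab⟩, Or.inl ⟨c, by simp⟩⟩
  have hr := (h.dict1 hd ⟨c, by simp⟩).rooted ⟨G.adj_mem _ _ hz1, PlaneGraph.adj_ne hz1⟩
    (PlaneGraph.adj_ne hz2)
  refine Or.inr ⟨z, hr.congr (fun _ _ h => h.1) ?_, hz1, hz2, ?_⟩
  · change (G.verts \ {p1}) \ {p2} = _
    ext v
    simp only [Set.mem_insert_iff, Set.mem_singleton_iff, Set.mem_sdiff]
    grind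
  · have h0 : L0 = {a, b} := by
      apply Finset.coe_injective
      rw [hL0ab]; simp
    rw [hLz, h0]
    exact (Finset.card_union_le _ _).trans (by
      have := Finset.card_le_two (a := a) (b := b)
      simp only [Finset.card_singleton]
      omega)

theorem not_dict_of_dem {C : Set (ℕ × ℕ)} (h : IsDemocracy C) : ¬IsDictatorship C :=
  fun h' => not_dem_of_dict h' h

theorem IsHarmonica.str {L : V → Finset ℕ} {G : PlaneGraph V} {p1 p2 q1 q2 : V}
    {C : Set (ℕ × ℕ)} (h : IsHarmonica L G p1 p2 q1 q2 C) : Str L G p1 p2 q1 q2 C := by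
  induction h with
  | same G p1 p2 q1 q2 C hcanvas hproper hgov hq hverts hedges =>
    refine ⟨hcanvas.adj, ?_, ?_, fun _ => Or.inl hverts, fun _ _ => Or.inl hverts,
      fun _ _ => Or.inl (by rw [hverts, Set.pair_comm])⟩
    · rw [hverts]
      rcases hq with ⟨rfl, rfl⟩ | ⟨rfl, rfl⟩ <;> simp
    · rw [hverts]
      rcases hq with ⟨rfl, rfl⟩ | ⟨rfl, rfl⟩ <;> simp
  | cherry G p1 p2 q1 q2 z C hcanvas hproper hdict hq hqadj hqout hverts hedges hz hzdict =>
    refine ⟨hcanvas.adj, G.adj_mem _ _ hqadj, PlaneGraph.adj_mem' hqadj,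
      fun h => absurd h (not_dem_of_dict hdict), fun _ h1 => ?_, fun _ h2 => ?_⟩
    · rcases hzdict with ⟨rfl, -⟩ | ⟨rfl, h2⟩
      · exact dictStr_cherry hcanvas.1 hq hqadj hverts hz
      · exact (not_both_dict hdict h1 h2).elim
    · rcases hzdict with ⟨rfl, h1⟩ | ⟨rfl, -⟩
      · exact (not_both_dict hdict h1 h2).elim
      · refine dictStr_cherry hcanvas.1.symm hq hqadj ?_ (by rw [Set.pair_comm]; exact hz)
        rw [hverts, Set.insert_comm]
  | dict G p1 p2 q1 q2 z w u1 u2 c L0 C C' hcanvas hproper hdict hq hqadj hqout hz hzu1 hzu2 hu12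
      hL0 hLu1 hLu2 hu1P hu2P hdem hC'1 hC'2 hrec ih =>
    have hL1 : u1 ≠ w → L u1 = L0 ∪ {c} := fun hne => hLu1 (fun h => hne (hu1P h))
    have hL2 : u2 ≠ w → L u2 = L0 ∪ {c} := fun hne => hLu2 (fun h => hne (hu2P h))
    refine ⟨hcanvas.adj, G.adj_mem _ _ hqadj, PlaneGraph.adj_mem' hqadj,
      fun h => absurd h (not_dem_of_dict hdict), fun _ h1 => ?_, fun _ h2 => ?_⟩
    · rcases hz with ⟨rfl, rfl, -⟩ | ⟨rfl, rfl, h2, -⟩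
      · exact dictStr_triangle hL0 hcanvas.adj hzu1 hzu2 hu12 hL1 hL2 ih.q1_mem ih.q2_mem
          (ih.dem hdem)
      · exact (not_both_dict hdict h1 ⟨_, h2⟩).elim
    · rcases hz with ⟨rfl, rfl, h1, -⟩ | ⟨rfl, rfl, -⟩
      · exact (not_both_dict hdict ⟨_, h1⟩ h2).elim
      · rw [Set.pair_comm] at ih
        exact dictStr_triangle hL0 (G.adj_symm _ _ hcanvas.adj) hzu1 hzu2 hu12 hL1 hL2
          ih.q1_mem ih.q2_mem (ih.dem hdem)
  | demo1 G p1 p2 q1 q2 z a b c L0 C C' hcanvas hproper hdemC hq hqadj hqout hz1 hz2 hLz hC1 hC2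
      hab hL0ab hC' hrec ih =>
    subst hC'
    exact ⟨hcanvas.adj, G.adj_mem _ _ hqadj, PlaneGraph.adj_mem' hqadj,
      fun _ => demStr_of_rec hz1 hz2 hLz hab hL0ab ih,
      fun h => absurd h (not_dict_of_dem hdemC), fun h => absurd h (not_dict_of_dem hdemC)⟩
  | demo2 G p1 p2 q1 q2 z a b c L0 C C' hcanvas hproper hdemC hq hqadj hqout hz1 hz2 hLz hC1 hC2
      hab hL0ab hC' hrec ih =>
    subst hC'
    exact ⟨hcanvas.adj, G.adj_mem _ _ hqadj, PlaneGraph.adj_mem' hqadj,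
      fun _ => (demStr_of_rec hz2 hz1 hLz hab hL0ab ih).symm,
      fun h => absurd h (not_dict_of_dem hdemC), fun h => absurd h (not_dict_of_dem hdemC)⟩

end Structure

/-! ### Extending colorings -/

section Extend

variable {V : Type u}

/-- Proper list colorings. -/
def Col (G : PlaneGraph V) (L : V → Finset ℕ) (φ : V → ℕ) : Prop :=
  (∀ v ∈ G.verts, φ v ∈ L v) ∧ ∀ u v, G.Adj u v → φ u ≠ φ v

theorem Col.delete {G : PlaneGraph V} {L : V → Finset ℕ} {φ : V → ℕ} (h : Col G L φ)
    (s : Set V) : Col (G.deleteVerts s) L φ :=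
  ⟨fun v hv => h.1 v hv.1, fun u v huv => h.2 u v huv.1⟩

open Classical in
theorem Col.extend {G : PlaneGraph V} {L : V → Finset ℕ} {φ : V → ℕ} {p : V} {e : ℕ}
    (h : Col (G.deleteVerts {p}) L φ) (he : e ∈ L p) (hp : ∀ v, G.Adj p v → e ≠ φ v) :
    Col G L (Function.update φ p e) := by
  constructor
  · intro v hv
    by_cases hvp : v = p
    · subst hvp; simpa using he
    · rw [Function.update_of_ne hvp]
      exact h.1 v ⟨hv, hvp⟩
  · intro u v huv
    have hne := PlaneGraph.adj_ne huv
    by_cases hup : u = p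
    · subst hup
      rw [Function.update_self, Function.update_of_ne hne.symm]
      exact hp v huv
    · by_cases hvp : v = p
      · subst hvp
        rw [Function.update_self, Function.update_of_ne hne]
        exact (hp u (G.adj_symm _ _ huv)).symm
      · rw [Function.update_of_ne hup, Function.update_of_ne hvp]
        exact h.2 u v ⟨huv, hup, hvp⟩

open Classical in
theorem Col.extend2 {G : PlaneGraph V} {L : V → Finset ℕ} {φ : V → ℕ} {z w : V} {c d : ℕ}
    (h : Col (G.deleteVerts {z, w}) L φ) (hzw : z ≠ w) (hc : c ∈ L z) (hd : d ∈ L w)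
    (hcd : c ≠ d) (hz : ∀ v, G.Adj z v → v ≠ w → c ≠ φ v)
    (hw : ∀ v, G.Adj w v → v ≠ z → d ≠ φ v) :
    Col G L (Function.update (Function.update φ w d) z c) := by
  have h1 : Col (G.deleteVerts {z}) L (Function.update φ w d) := by
    refine Col.extend (G := G.deleteVerts {z}) ?_ hd (fun v hv => hw v hv.1 hv.2.2)
    refine ⟨fun v hv => h.1 v ⟨hv.1.1, ?_⟩, fun u v huv => h.2 u v ⟨huv.1.1, ?_, ?_⟩⟩
    · rintro (e | e)
      exacts [hv.1.2 e, hv.2 e]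
    · rintro (e | e)
      exacts [huv.1.2.1 e, huv.2.1 e]
    · rintro (e | e)
      exacts [huv.1.2.2 e, huv.2.2 e]
  refine h1.extend hc (fun v hv => ?_)
  by_cases hvw : v = w
  · subst hvw
    simpa using hcd
  · rw [Function.update_of_ne hvw]
    exact hz v hv hvw

/-- The dictator of a triangle sees nothing beyond the triangle. -/
theorem far_dictator {G H : PlaneGraph V} {L : V → Finset ℕ} {z u1 u2 : V}
    (hHv : H.verts ⊆ G.verts) (hHa : ∀ u v, H.Adj u v → G.Adj u v) (hzH : z ∉ H.verts)
    (hzu1 : G.Adj z u1) (hzu2 : G.Adj z u2) (hu : G.Adj u1 u2)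
    (oz : G.OnOuter z) (o1 : G.OnOuter u1) (o2 : G.OnOuter u2)
    (ho : ∀ v ∈ G.verts, (L v).card ≤ 3 → G.OnOuter v)
    (hD : DemStr H L u1 u2) {y : V} (hy : y ∈ H.verts) (hzy : G.Adj z y) : y = u1 ∨ y = u2 := by
  by_contra hcon
  rcases hD with h | ⟨x, hr, b1, b2, h3⟩
  · rw [h] at hy
    exact hcon hy
  · have hr' := hr.congr hHa rfl
    exact G.no_K4 (fun v hv => hHv hv.1) hr' (fun h => hzH h.1) (fun h => h.2 (by simp))
      (fun h => h.2 (by simp)) hzu1 hzu2 hu (y1 := y) ⟨hy, hcon⟩ hr.1 hr.1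
      (G.adj_symm _ _ hzy) (hHa _ _ b1) (hHa _ _ b2) oz o1 o2
      (ho x (hHv (H.adj_mem _ _ b1)) h3)

/-- A further neighbor of the dictator sees nothing beyond the triangle. -/
theorem far_other {G H : PlaneGraph V} {L : V → Finset ℕ} {z w u1 u2 : V}
    (hHv : H.verts ⊆ G.verts) (hHa : ∀ u v, H.Adj u v → G.Adj u v) (hzH : z ∉ H.verts)
    (hzw : G.Adj z w) (n1 : u1 ≠ w) (n2 : u2 ≠ w)
    (hzu1 : G.Adj z u1) (hzu2 : G.Adj z u2) (hu : G.Adj u1 u2)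
    (oz : G.OnOuter z) (o1 : G.OnOuter u1) (o2 : G.OnOuter u2)
    (ho : ∀ v ∈ G.verts, (L v).card ≤ 3 → G.OnOuter v)
    (hD : DemStr H L u1 u2) {y : V} (hy : y ∈ H.verts) (hwy : G.Adj w y) : y = u1 ∨ y = u2 := by
  by_contra hcon
  have e := PlaneGraph.adj_ne hzw
  rcases hD with h | ⟨x, hr, b1, b2, h3⟩
  · rw [h] at hy
    exact hcon hy
  · have hr' := (hr.congr hHa rfl).insert' ⟨hy, hcon⟩ (G.adj_symm _ _ hwy)
    refine G.no_K4 (Y := insert w (H.verts \ {u1, u2})) ?_ hr' ?_ ?_ ?_ hzu1 hzu2 hu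
      (Or.inl rfl) (Or.inr hr.1) (Or.inr hr.1)
      (G.adj_symm _ _ hzw) (hHa _ _ b1) (hHa _ _ b2) oz o1 o2
      (ho x (hHv (H.adj_mem _ _ b1)) h3)
    · rintro v (rfl | hv)
      exacts [PlaneGraph.adj_mem' hzw, hHv hv.1]
    · rintro (h | h)
      exacts [e h, hzH h.1]
    · rintro (h | h)
      exacts [n1 h, h.2 (by simp)]
    · rintro (h | h)
      exacts [n2 h, h.2 (by simp)]

/-- No outer drawing of the complete graph on four vertices. -/
theorem no_K4_single {G : PlaneGraph V} {z w u1 u2 : V} (hzw : G.Adj z w)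
    (hzu1 : G.Adj z u1) (hzu2 : G.Adj z u2) (hu : G.Adj u1 u2)
    (oz : G.OnOuter z) (ow : G.OnOuter w) (o1 : G.OnOuter u1) (o2 : G.OnOuter u2)
    (h1 : G.Adj w u1) (h2 : G.Adj w u2) : False := by
  refine G.no_K4 (Y := {w}) ?_ (PlaneGraph.Rooted.single G w) (PlaneGraph.adj_ne hzw)
    (PlaneGraph.adj_ne h1).symm (PlaneGraph.adj_ne h2).symm hzu1 hzu2 hu rfl rfl rfl
    (G.adj_symm _ _ hzw) h1 h2 oz o1 o2 ow
  rintro v rfl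
  exact PlaneGraph.adj_mem' hzw

theorem dem_cases {C' : Set (ℕ × ℕ)} {L0 : Finset ℕ} (hdem : IsDemocracy C')
    (h1 : fstColors C' = (L0 : Set ℕ)) :
    ∃ x y, x ≠ y ∧ C' = {(x, y), (y, x)} ∧ ∀ t, t ∈ L0 ↔ t = x ∨ t = y := by
  obtain ⟨x, y, hxy, rfl⟩ := hdem
  refine ⟨x, y, hxy, rfl, fun t => ?_⟩
  rw [← Finset.mem_coe, ← h1]
  simp [fstColors, eq_comm]

theorem dict_ext {G : PlaneGraph V} {L : V → Finset ℕ} {z w u1 u2 : V} {c : ℕ}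
    {L0 : Finset ℕ} {W : Set ℕ} {C' : Set (ℕ × ℕ)} {A : V → V → Prop}
    (hcv : IsCanvas G {z, w} A L) (hzw : G.Adj z w)
    (hzu1 : G.Adj z u1) (hzu2 : G.Adj z u2) (hu : G.Adj u1 u2) (hL0 : L0.card = 2)
    (hL1 : u1 ≠ w → L u1 = L0 ∪ {c}) (hL2 : u2 ≠ w → L u2 = L0 ∪ {c})
    (hdem : IsDemocracy C') (hC'1 : fstColors C' = (L0 : Set ℕ))
    (hc : c ∈ L z) (hWL : ∀ d ∈ W, d ∈ L w) (hWc : ∀ d ∈ W, d ≠ c)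
    (hW2 : ∃ d ∈ W, ∃ d' ∈ W, d ≠ d')
    (hW1 : u1 = w → W = L0) (hW2' : u2 = w → W = L0)
    (hD : DemStr (G.deleteVerts ({z, w} \ {u1, u2})) L u1 u2) {φ : V → ℕ}
    (hφ : Col (G.deleteVerts ({z, w} \ {u1, u2})) L φ) (hφC : (φ u1, φ u2) ∈ C') :
    ∃ ψ, Col G L ψ ∧ ψ z = c ∧ ψ w ∈ W ∧
      ∀ v ∈ (G.deleteVerts ({z, w} \ {u1, u2})).verts, ψ v = φ v := by
  classical
  have e1 := PlaneGraph.adj_ne hzw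
  have e2 := PlaneGraph.adj_ne hzu1
  have e3 := PlaneGraph.adj_ne hzu2
  have e4 := PlaneGraph.adj_ne hu
  have v1 := PlaneGraph.adj_mem' hzu1
  have v2 := PlaneGraph.adj_mem' hzu2
  have oz : G.OnOuter z := hcv.sverts_outer z (by simp)
  have ow : G.OnOuter w := hcv.sverts_outer w (by simp)
  have ho : ∀ v ∈ G.verts, (L v).card ≤ 3 → G.OnOuter v := fun v => hcv.onOuter_of_card
  have hcard : (L0 ∪ {c}).card ≤ 3 := by
    have := Finset.card_union_le L0 {c}
    simp only [Finset.card_singleton] at this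
    omega
  have o1 : G.OnOuter u1 := by
    by_cases h : u1 = w
    · rwa [h]
    · exact ho u1 v1 (by rw [hL1 h]; exact hcard)
  have o2 : G.OnOuter u2 := by
    by_cases h : u2 = w
    · rwa [h]
    · exact ho u2 v2 (by rw [hL2 h]; exact hcard)
  have hcL0 : c ∉ L0 := by
    intro hcm
    have hun : L0 ∪ {c} = L0 := by simpa using hcm
    by_cases h : u1 = w
    · have h2 : u2 ≠ w := fun h' => e4 (h.trans h'.symm)
      have := hcv.card_outside_S u2 v2 (by simp [h2, e3.symm])
      rw [hL2 h2, hun] at this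
      omega
    · have := hcv.card_outside_S u1 v1 (by simp [h, e2.symm])
      rw [hL1 h, hun] at this
      omega
  obtain ⟨x, y, hxy, rfl, hL0m⟩ := dem_cases hdem hC'1
  have hφ1 : φ u1 ∈ L0 ∧ φ u2 ∈ L0 ∧ φ u1 ≠ φ u2 := by
    rw [hL0m, hL0m]
    simp only [Set.mem_insert_iff, Set.mem_singleton_iff, Prod.mk.injEq] at hφC
    grind
  obtain ⟨f1, f2, f12⟩ := hφ1
  set H := G.deleteVerts ({z, w} \ {u1, u2}) with hH
  have hHv : H.verts ⊆ G.verts := fun v hv => hv.1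
  have hHa : ∀ u v, H.Adj u v → G.Adj u v := fun u v h => h.1
  have hzH : z ∉ H.verts := fun h => h.2 ⟨by simp, by simp [e2, e3]⟩
  have farz : ∀ v ∈ H.verts, G.Adj z v → v = u1 ∨ v = u2 := fun v hv hzv =>
    far_dictator hHv hHa hzH hzu1 hzu2 hu oz o1 o2 ho hD hv hzv
  have hcz : ∀ v ∈ H.verts, G.Adj z v → c ≠ φ v := by
    intro v hv hzv
    rcases farz v hv hzv with rfl | rfl
    · exact fun h => hcL0 (h ▸ f1)
    · exact fun h => hcL0 (h ▸ f2)
  by_cases hw : w = u1 ∨ w = u2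
  · have hs : (({z, w} : Set V) \ {u1, u2}) = {z} := by
      ext v
      simp only [Set.mem_insert_iff, Set.mem_singleton_iff, Set.mem_sdiff]
      grind
    have hmem : ∀ v ∈ G.verts, v ≠ z → v ∈ H.verts := by
      intro v hv hvz
      refine ⟨hv, ?_⟩
      rw [hs]
      exact hvz
    have hφ' : Col (G.deleteVerts {z}) L φ := by rw [← hs]; exact hφ
    refine ⟨_, hφ'.extend hc (fun v hv => ?_), Function.update_self .., ?_, fun v hv => ?_⟩
    · exact hcz v (hmem v (PlaneGraph.adj_mem' hv) (PlaneGraph.adj_ne hv).symm) hv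
    · rw [Function.update_of_ne e1.symm]
      rcases hw with h | h
      · rw [hW1 h.symm, h]; exact f1
      · rw [hW2' h.symm, h]; exact f2
    · exact Function.update_of_ne (by rintro rfl; exact hzH hv) _ _
  · push Not at hw
    have hs : (({z, w} : Set V) \ {u1, u2}) = {z, w} := by
      ext v
      simp only [Set.mem_insert_iff, Set.mem_singleton_iff, Set.mem_sdiff]
      grind
    have hmem : ∀ v ∈ G.verts, v ≠ z → v ≠ w → v ∈ H.verts := by
      intro v hv hvz hvw
      refine ⟨hv, ?_⟩
      rw [hs]
      simp [hvz, hvw]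
    have hwH : w ∉ H.verts := fun h => h.2 ⟨by simp, by simp [hw]⟩
    have hφ' : Col (G.deleteVerts {z, w}) L φ := by rw [← hs]; exact hφ
    have hnot : ¬(G.Adj w u1 ∧ G.Adj w u2) := fun h =>
      no_K4_single hzw hzu1 hzu2 hu oz ow o1 o2 h.1 h.2
    have farw : ∀ v ∈ H.verts, G.Adj w v → v = u1 ∨ v = u2 := fun v hv hwv =>
      far_other hHv hHa hzH hzw hw.1.symm hw.2.symm hzu1 hzu2 hu oz o1 o2 ho hD hv hwv
    obtain ⟨d, hd, hdn⟩ : ∃ d ∈ W, ∀ v ∈ H.verts, G.Adj w v → d ≠ φ v := by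
      obtain ⟨d, hd, d', hd', hdd⟩ := hW2
      have key : ∀ t, ∃ d ∈ W, d ≠ t := fun t => by
        by_cases h : d = t
        · exact ⟨d', hd', fun h' => hdd (h.trans h'.symm)⟩
        · exact ⟨d, hd, h⟩
      by_cases hA : G.Adj w u1
      · obtain ⟨d, hd, hne⟩ := key (φ u1)
        refine ⟨d, hd, fun v hv hwv => ?_⟩
        rcases farw v hv hwv with rfl | rfl
        · exact hne
        · exact (hnot ⟨hA, hwv⟩).elim
      · obtain ⟨d, hd, hne⟩ := key (φ u2)
        refine ⟨d, hd, fun v hv hwv => ?_⟩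
        rcases farw v hv hwv with rfl | rfl
        · exact (hA hwv).elim
        · exact hne
    refine ⟨_, hφ'.extend2 e1 hc (hWL d hd) (hWc d hd).symm (fun v hv hvw => ?_)
      (fun v hv hvz => ?_), Function.update_self .., ?_, fun v hv => ?_⟩
    · exact hcz v (hmem v (PlaneGraph.adj_mem' hv) (PlaneGraph.adj_ne hv).symm hvw) hv
    · exact hdn v (hmem v (PlaneGraph.adj_mem' hv) hvz (PlaneGraph.adj_ne hv).symm) hv
    · rw [Function.update_of_ne e1.symm, Function.update_self]; exact hd
    · rw [Function.update_of_ne (by rintro rfl; exact hzH hv),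
        Function.update_of_ne (by rintro rfl; exact hwH hv)]

theorem dict_conv {G : PlaneGraph V} {L : V → Finset ℕ} {z w u1 u2 : V} {c : ℕ}
    {L0 : Finset ℕ} {W : Set ℕ} {C' : Set (ℕ × ℕ)}
    (hzu1 : G.Adj z u1) (hzu2 : G.Adj z u2) (hu : G.Adj u1 u2)
    (hL1 : u1 ≠ w → L u1 = L0 ∪ {c}) (hL2 : u2 ≠ w → L u2 = L0 ∪ {c})
    (hdem : IsDemocracy C') (hC'1 : fstColors C' = (L0 : Set ℕ))
    (hW1 : u1 = w → W = L0) (hW2' : u2 = w → W = L0) {φ : V → ℕ}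
    (hφ : Col G L φ) (hz : φ z = c) (hw : φ w ∈ W) : (φ u1, φ u2) ∈ C' := by
  obtain ⟨x, y, hxy, rfl, hL0m⟩ := dem_cases hdem hC'1
  have f1 : φ u1 ∈ L0 := by
    by_cases h : u1 = w
    · rw [hW1 h, ← h] at hw; exact hw
    · have := hφ.1 u1 (PlaneGraph.adj_mem' hzu1)
      rw [hL1 h] at this
      have h2 := hφ.2 _ _ hzu1
      simp only [Finset.mem_union, Finset.mem_singleton] at this
      exact this.resolve_right (fun h3 => h2 (hz.trans h3.symm))
  have f2 : φ u2 ∈ L0 := by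
    by_cases h : u2 = w
    · rw [hW2' h, ← h] at hw; exact hw
    · have := hφ.1 u2 (PlaneGraph.adj_mem' hzu2)
      rw [hL2 h] at this
      have h2 := hφ.2 _ _ hzu2
      simp only [Finset.mem_union, Finset.mem_singleton] at this
      exact this.resolve_right (fun h3 => h2 (hz.trans h3.symm))
  have f12 := hφ.2 _ _ hu
  rw [hL0m] at f1 f2
  simp only [Set.mem_insert_iff, Set.mem_singleton_iff, Prod.mk.injEq]
  grind

/-- Extension of a coloring across a democracy. -/
theorem demo_ext {G : PlaneGraph V} {L : V → Finset ℕ} {p1 p2 q1 q2 z : V} {a b c : ℕ}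
    (o1 : G.OnOuter p1) (o2 : G.OnOuter p2)
    (ho : ∀ v ∈ G.verts, (L v).card ≤ 3 → G.OnOuter v) (oz : G.OnOuter z)
    (oq1 : G.OnOuter q1) (oq2 : G.OnOuter q2) (h12 : G.Adj p1 p2)
    (hz1 : G.Adj z p1) (hz2 : G.Adj z p2) (hab : a ≠ b) (hca : c ≠ a) (hcb : c ≠ b)
    (ha1 : a ∈ L p1) (hb1 : b ∈ L p1) (ha2 : a ∈ L p2) (hb2 : b ∈ L p2)
    (hq1 : q1 ∈ (G.deleteVerts {p1}).verts) (hq2 : q2 ∈ (G.deleteVerts {p1}).verts)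
    (hD : DictStr (G.deleteVerts {p1}) L z p2 q1 q2) {φ : V → ℕ}
    (hφ : Col (G.deleteVerts {p1}) L φ) (hφz : φ z = c) (hφ2 : φ p2 = a ∨ φ p2 = b) :
    ∃ ψ, Col G L ψ ∧ ((ψ p1 = a ∧ ψ p2 = b) ∨ (ψ p1 = b ∧ ψ p2 = a)) ∧
      ψ q1 = φ q1 ∧ ψ q2 = φ q2 := by
  classical
  have n1 : q1 ≠ p1 := hq1.2
  have n2 : q2 ≠ p1 := hq2.2
  have e12 := PlaneGraph.adj_ne h12
  have ez1 := PlaneGraph.adj_ne hz1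
  have ez2 := PlaneGraph.adj_ne hz2
  have ext1 : (∀ v, G.Adj p1 v → v = z ∨ v = p2) →
      ∃ ψ, Col G L ψ ∧ ((ψ p1 = a ∧ ψ p2 = b) ∨ (ψ p1 = b ∧ ψ p2 = a)) ∧
      ψ q1 = φ q1 ∧ ψ q2 = φ q2 := by
    intro hn
    rcases hφ2 with h | h
    · refine ⟨_, hφ.extend hb1 (fun v hv => ?_), Or.inr ⟨Function.update_self .., ?_⟩,
        Function.update_of_ne n1 _ _, Function.update_of_ne n2 _ _⟩
      · rcases hn v hv with rfl | rfl
        · rw [hφz]; exact hcb.symm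
        · rw [h]; exact hab.symm
      · rw [Function.update_of_ne e12.symm, h]
    · refine ⟨_, hφ.extend ha1 (fun v hv => ?_), Or.inl ⟨Function.update_self .., ?_⟩,
        Function.update_of_ne n1 _ _, Function.update_of_ne n2 _ _⟩
      · rcases hn v hv with rfl | rfl
        · rw [hφz]; exact hca.symm
        · rw [h]; exact hab
      · rw [Function.update_of_ne e12.symm, h]
  have ext2 : p2 ≠ q1 → p2 ≠ q2 → (∀ v, G.Adj p2 v → v = z ∨ v = p1) →
      (∃ x, ∀ v, G.Adj p1 v → v = z ∨ v = p2 ∨ v = x) →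
      ∃ ψ, Col G L ψ ∧ ((ψ p1 = a ∧ ψ p2 = b) ∨ (ψ p1 = b ∧ ψ p2 = a)) ∧
      ψ q1 = φ q1 ∧ ψ q2 = φ q2 := by
    rintro m1 m2 hn2 ⟨x, hn1⟩
    have hφ' : Col (G.deleteVerts {p1, p2}) L φ := by
      refine ⟨fun v hv => hφ.1 v ⟨hv.1, fun h => hv.2 (Or.inl h)⟩, fun u v huv =>
        hφ.2 u v ⟨huv.1, fun h => huv.2.1 (Or.inl h), fun h => huv.2.2 (Or.inl h)⟩⟩
    by_cases hx : φ x = a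
    · refine ⟨_, hφ'.extend2 e12 hb1 ha2 hab.symm (fun v hv hvw => ?_) (fun v hv hvz => ?_),
        Or.inr ⟨Function.update_self .., ?_⟩, ?_, ?_⟩
      · rcases hn1 v hv with rfl | rfl | rfl
        · rw [hφz]; exact hcb.symm
        · exact (hvw rfl).elim
        · rw [hx]; exact hab.symm
      · rcases hn2 v hv with rfl | rfl
        · rw [hφz]; exact hca.symm
        · exact (hvz rfl).elim
      · rw [Function.update_of_ne e12.symm, Function.update_self]
      · rw [Function.update_of_ne n1, Function.update_of_ne m1.symm]
      · rw [Function.update_of_ne n2, Function.update_of_ne m2.symm]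
    · refine ⟨_, hφ'.extend2 e12 ha1 hb2 hab (fun v hv hvw => ?_) (fun v hv hvz => ?_),
        Or.inl ⟨Function.update_self .., ?_⟩, ?_, ?_⟩
      · rcases hn1 v hv with rfl | rfl | rfl
        · rw [hφz]; exact hca.symm
        · exact (hvw rfl).elim
        · exact fun h => hx h.symm
      · rcases hn2 v hv with rfl | rfl
        · rw [hφz]; exact hcb.symm
        · exact (hvz rfl).elim
      · rw [Function.update_of_ne e12.symm, Function.update_self]
      · rw [Function.update_of_ne n1, Function.update_of_ne m1.symm]
      · rw [Function.update_of_ne n2, Function.update_of_ne m2.symm]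
  have hmem : ∀ v, G.Adj p1 v → v ∈ (G.deleteVerts {p1}).verts := fun v hv =>
    ⟨PlaneGraph.adj_mem' hv, (PlaneGraph.adj_ne hv).symm⟩
  have hmem2 : ∀ v, G.Adj p2 v → v ≠ p1 → v ∈ (G.deleteVerts {p1}).verts := fun v hv hne =>
    ⟨PlaneGraph.adj_mem' hv, hne⟩
  set H := G.deleteVerts {p1} with hH
  have hHv : H.verts ⊆ G.verts := fun v hv => hv.1
  have hHa : ∀ u v, H.Adj u v → G.Adj u v := fun u v h => h.1
  have hp1H : p1 ∉ H.verts := fun h => h.2 rfl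
  have hz1' := G.adj_symm _ _ hz1
  have hz2' := G.adj_symm _ _ hz2
  rcases hD with hv | ⟨q, hqz, hqw, hv, ha, hq, m1, m2⟩ | ⟨x, hr, b1, b2, hx3⟩ |
    ⟨u1, u2, m1, m2, k1, k2, a1, a2, a12, c1, c2, h⟩
  · refine ext1 (fun v hv' => ?_)
    have := hmem v hv'
    rw [hv] at this
    exact this
  · by_cases hA : G.Adj p1 q
    · refine ext2 m1 m2 (fun v hv' => ?_) ⟨q, fun v hv' => ?_⟩
      · by_cases hvp : v = p1
        · exact Or.inr hvp
        have := hmem2 v hv' hvp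
        rw [hv] at this
        rcases this with h | h | h
        · exact Or.inl h
        · exact ((PlaneGraph.adj_ne hv') h.symm).elim
        · exfalso
          have h' : v = q := h
          subst h'
          have oq : G.OnOuter v := by rcases hq with rfl | rfl <;> assumption
          exact no_K4_single (hHa _ _ ha) hz1 hz2 h12 oz oq o1 o2
            (G.adj_symm _ _ hA) (G.adj_symm _ _ hv')
      · have := hmem v hv'
        rw [hv] at this
        exact this
    · refine ext1 (fun v hv' => ?_)
      have := hmem v hv'
      rw [hv] at this
      rcases this with h | h | h
      · exact Or.inl h
      · exact Or.inr h
      · exact (hA ((show v = q from h) ▸ hv')).elim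
  · refine ext1 (fun v hv' => ?_)
    by_contra hcon
    exact G.no_K4 (fun v hv => hHv hv.1) (hr.congr hHa rfl) (fun h => hp1H h.1)
      (fun h => h.2 (by simp)) (fun h => h.2 (by simp)) hz1' h12 hz2 (y1 := v)
      ⟨hmem v hv', hcon⟩ hr.1 hr.1 (G.adj_symm _ _ hv') (hHa _ _ b1) (hHa _ _ b2) o1 oz o2
      (ho x (hHv (H.adj_mem _ _ b1)) hx3)
  · by_cases hA : ∃ v ∈ H.verts \ {z, p2}, G.Adj p1 v
    · obtain ⟨v0, hv0, hv0a⟩ := hA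
      have hr := (rooted_of_last k1 k2 a1 a2 a12
        (h.imp id (fun ⟨x, h1, h2, h3, _⟩ => ⟨x, h1, h2, h3⟩))).congr hHa rfl
      have ou1 := ho u1 (hHv (PlaneGraph.adj_mem' a1)) c1
      have ou2 := ho u2 (hHv (PlaneGraph.adj_mem' a2)) c2
      have far2 : ∀ v, G.Adj p2 v → v = z ∨ v = p1 := by
        intro v hv
        by_contra hcon
        push Not at hcon
        exact G.no_K4 (fun v hv => hHv hv.1) hr (fun h => h.2 (by simp)) (fun h => hp1H h.1)
          (fun h => h.2 (by simp)) hz1 hz2 h12 (y1 := u1) (y2 := v0) (y3 := v) hr.1 hv0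
          ⟨hmem2 v hv hcon.2, by simp [hcon.1, (PlaneGraph.adj_ne hv).symm]⟩
          (G.adj_symm _ _ (hHa _ _ a1)) (G.adj_symm _ _ hv0a) (G.adj_symm _ _ hv)
          oz o1 o2 ou1
      have far1 : ∀ v, G.Adj p1 v → v = z ∨ v = p2 ∨ v = u1 ∨ v = u2 := by
        intro v hv
        by_contra hcon
        rcases h with h | ⟨x, hrx, b1, b2, h3⟩
        · have := hmem v hv
          rw [h] at this
          exact hcon this
        · have hin : v ∈ H.verts \ {z, p2, u1, u2} := ⟨hmem v hv, hcon⟩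
          refine G.no_K4 (Y := insert p1 (H.verts \ {z, p2, u1, u2})) ?_
            ((hrx.congr hHa rfl).insert' hin (G.adj_symm _ _ hv)) ?_ ?_ ?_ (hHa _ _ a1)
            (hHa _ _ a2) (hHa _ _ a12) (Or.inl rfl) (Or.inr hrx.1) (Or.inr hrx.1)
            hz1' (hHa _ _ b1) (hHa _ _ b2) oz ou1 ou2 (ho x (hHv (H.adj_mem _ _ b1)) h3)
          · rintro v (rfl | hv)
            exacts [G.adj_mem _ _ h12, hHv hv.1]
          · rintro (h | h)
            exacts [ez1 h, h.2 (by simp)]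
          · rintro (h | h)
            exacts [hp1H (h ▸ PlaneGraph.adj_mem' a1), h.2 (by simp)]
          · rintro (h | h)
            exacts [hp1H (h ▸ PlaneGraph.adj_mem' a2), h.2 (by simp)]
      by_cases hB : G.Adj p1 u1
      · refine ext2 m1 m2 far2 ⟨u1, fun v hv => ?_⟩
        rcases far1 v hv with h | h | h | h
        · exact Or.inl h
        · exact Or.inr (Or.inl h)
        · exact Or.inr (Or.inr h)
        · exfalso
          subst h
          exact no_K4_single hz1 (hHa _ _ a1) (hHa _ _ a2) (hHa _ _ a12) oz o1 ou1 ou2 hB hv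
      · refine ext2 m1 m2 far2 ⟨u2, fun v hv => ?_⟩
        rcases far1 v hv with h | h | h | h
        · exact Or.inl h
        · exact Or.inr (Or.inl h)
        · exact (hB (h ▸ hv)).elim
        · exact Or.inr (Or.inr h)
    · refine ext1 (fun v hv => ?_)
      by_contra hcon
      exact hA ⟨v, ⟨hmem v hv, hcon⟩, hv⟩

end Extend

section Main

variable {V : Type u}

theorem dict_phi {G : PlaneGraph V} {L : V → Finset ℕ} {p1 p2 q1 q2 z w u1 u2 : V} {c : ℕ}
    {L0 : Finset ℕ} {W : Set ℕ} {C C' : Set (ℕ × ℕ)} {A : V → V → Prop}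
    (hcv : IsCanvas G {z, w} A L) (hzw : G.Adj z w)
    (hzu1 : G.Adj z u1) (hzu2 : G.Adj z u2) (hu : G.Adj u1 u2) (hL0 : L0.card = 2)
    (hL1 : u1 ≠ w → L u1 = L0 ∪ {c}) (hL2 : u2 ≠ w → L u2 = L0 ∪ {c})
    (hdem : IsDemocracy C') (hC'1 : fstColors C' = (L0 : Set ℕ))
    (hc : c ∈ L z) (hWL : ∀ d ∈ W, d ∈ L w) (hWc : ∀ d ∈ W, d ≠ c)
    (hW2 : ∃ d ∈ W, ∃ d' ∈ W, d ≠ d')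
    (hW1 : u1 = w → W = L0) (hW2' : u2 = w → W = L0)
    (hC : ∀ φ : V → ℕ, (φ p1, φ p2) ∈ C ↔ φ z = c ∧ φ w ∈ W)
    (hS : Str L (G.deleteVerts ({z, w} \ {u1, u2})) u1 u2 q1 q2 C') :
    Phi G L p1 p2 q1 q2 C = Phi (G.deleteVerts ({z, w} \ {u1, u2})) L u1 u2 q1 q2 C' := by
  ext e
  constructor
  · rintro ⟨φ, h1, h2, h3, h4, h5⟩
    have hcol : Col G L φ := ⟨h1, h2⟩
    obtain ⟨hz, hw⟩ := (hC φ).1 h3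
    exact ⟨φ, (hcol.delete _).1, (hcol.delete _).2,
      dict_conv hzu1 hzu2 hu hL1 hL2 hdem hC'1 hW1 hW2' hcol hz hw, h4, h5⟩
  · rintro ⟨φ, h1, h2, h3, h4, h5⟩
    obtain ⟨ψ, hψ, hz, hw, hag⟩ := dict_ext hcv hzw hzu1 hzu2 hu hL0 hL1 hL2 hdem hC'1 hc hWL hWc
      hW2 hW1 hW2' (hS.dem hdem) ⟨h1, h2⟩ h3
    exact ⟨ψ, hψ.1, hψ.2, (hC ψ).2 ⟨hz, hw⟩, (hag _ hS.q1_mem).trans h4,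
      (hag _ hS.q2_mem).trans h5⟩

theorem demo_phi {G : PlaneGraph V} {L : V → Finset ℕ} {r1 r2 p1 p2 q1 q2 z : V} {a b c : ℕ}
    {L0 : Finset ℕ} {C : Set (ℕ × ℕ)} {A : V → V → Prop}
    (hcv : IsCanvas G {p1, p2} A L) (h12 : G.Adj p1 p2)
    (hqadj : G.Adj q1 q2) (hqout : G.EdgeOnOuter q1 q2)
    (hz1 : G.Adj z p1) (hz2 : G.Adj z p2) (hLz : L z = L0 ∪ {c})
    (hab : a ≠ b) (hL0ab : (L0 : Set ℕ) = {a, b})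
    (ha1 : a ∈ L p1) (hb1 : b ∈ L p1) (ha2 : a ∈ L p2) (hb2 : b ∈ L p2)
    (hC : ∀ φ : V → ℕ, (φ r1, φ r2) ∈ C ↔
      (φ p1 = a ∧ φ p2 = b) ∨ (φ p1 = b ∧ φ p2 = a))
    (hS : Str L (G.deleteVerts {p1}) z p2 q1 q2 {(c, a), (c, b)}) :
    Phi G L r1 r2 q1 q2 C = Phi (G.deleteVerts {p1}) L z p2 q1 q2 {(c, a), (c, b)} := by
  have h0 : L0 = {a, b} := by
    apply Finset.coe_injective
    rw [hL0ab]; simp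
  have vz := G.adj_mem _ _ hz1
  have hcard0 : ({a, b} : Finset ℕ).card ≤ 2 := Finset.card_le_two
  have hzc : 3 ≤ (L z).card := hcv.card_outside_S z vz
    (by simp [PlaneGraph.adj_ne hz1, PlaneGraph.adj_ne hz2])
  have hcab : c ∉ ({a, b} : Finset ℕ) := by
    intro h
    have hun : ({a, b} : Finset ℕ) ∪ {c} = {a, b} :=
      Finset.union_eq_left.2 (Finset.singleton_subset_iff.2 h)
    rw [hLz, h0, hun] at hzc
    omega
  simp only [Finset.mem_insert, Finset.mem_singleton, not_or] at hcab
  have hcard : (L z).card ≤ 3 := by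
    rw [hLz, h0]
    refine (Finset.card_union_le _ _).trans ?_
    simp only [Finset.card_singleton]
    omega
  have hzm : ∀ t, t ∈ L z ↔ (t = a ∨ t = b) ∨ t = c := by
    intro t
    rw [hLz, h0]
    simp [or_assoc]
  have ho : ∀ v ∈ G.verts, (L v).card ≤ 3 → G.OnOuter v := fun v => hcv.onOuter_of_card
  obtain ⟨oq1, oq2⟩ := PlaneGraph.onOuter_of_edge hqadj hqout
  have hd : IsDictatorship {(c, a), (c, b)} :=
    ⟨⟨(c, a), by simp, (c, b), by simp, by simpa using hab⟩, Or.inl ⟨c, by simp⟩⟩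
  ext e
  constructor
  · rintro ⟨φ, h1, h2, h3, h4, h5⟩
    have hcol : Col G L φ := ⟨h1, h2⟩
    have h3' := (hC φ).1 h3
    have hz := (hzm _).1 (h1 z vz)
    have k1 := h2 _ _ hz1
    have k2 := h2 _ _ hz2
    refine ⟨φ, (hcol.delete _).1, (hcol.delete _).2, ?_, h4, h5⟩
    simp only [Set.mem_insert_iff, Set.mem_singleton_iff, Prod.mk.injEq]
    grind
  · rintro ⟨φ, h1, h2, h3, h4, h5⟩
    simp only [Set.mem_insert_iff, Set.mem_singleton_iff, Prod.mk.injEq] at h3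
    obtain ⟨ψ, hψ, hP, e1, e2⟩ := demo_ext (hcv.sverts_outer p1 (by simp))
      (hcv.sverts_outer p2 (by simp)) ho (ho z vz hcard) oq1 oq2 h12 hz1 hz2 hab hcab.1 hcab.2
      ha1 hb1 ha2 hb2 hS.q1_mem hS.q2_mem (hS.dict1 hd ⟨c, by simp⟩) (φ := φ) ⟨h1, h2⟩
      (by grind) (by grind)
    exact ⟨ψ, hψ.1, hψ.2, (hC ψ).2 hP, e1.trans h4, e2.trans h5⟩

theorem IsCanvas.swap {G : PlaneGraph V} {L : V → Finset ℕ} {p1 p2 : V} {A : V → V → Prop}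
    (h : IsCanvas G {p1, p2} A L) : IsCanvas G {p2, p1} A L := by
  rwa [Set.pair_comm]

/-- The democracy written in terms of the two given colors. -/
theorem dem_of_pair {C : Set (ℕ × ℕ)} {L0 : Finset ℕ} {a b : ℕ} (hdem : IsDemocracy C)
    (h1 : fstColors C = (L0 : Set ℕ)) (hab : a ≠ b) (hL0ab : (L0 : Set ℕ) = {a, b}) :
    C = {(a, b), (b, a)} := by
  obtain ⟨x, y, hxy, rfl, hm⟩ := dem_cases hdem h1
  have ha : a ∈ L0 := by rw [← Finset.mem_coe, hL0ab]; simp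
  have hb : b ∈ L0 := by rw [← Finset.mem_coe, hL0ab]; simp
  rw [hm] at ha hb
  have : (a = x ∧ b = y) ∨ (a = y ∧ b = x) := by grind
  rcases this with ⟨rfl, rfl⟩ | ⟨rfl, rfl⟩
  · rfl
  · exact Set.pair_comm _ _

theorem swap_gov {C : Set (ℕ × ℕ)} (h : IsGovernment C) :
    IsGovernment {c | (c.2, c.1) ∈ C} := by
  rcases h with ⟨⟨c, hc, d, hd, hcd⟩, h⟩ | ⟨x, y, hxy, rfl⟩
  · refine Or.inl ⟨⟨(c.2, c.1), hc, (d.2, d.1), hd, ?_⟩, ?_⟩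
    · intro he
      simp only [Prod.mk.injEq] at he
      exact hcd (Prod.ext he.2 he.1)
    · rcases h with ⟨a, ha⟩ | ⟨a, ha⟩
      · exact Or.inr ⟨a, fun e he => ha _ he⟩
      · exact Or.inl ⟨a, fun e he => ha _ he⟩
  · refine Or.inr ⟨x, y, hxy, ?_⟩
    ext ⟨s, t⟩
    simp only [Set.mem_ofPred_eq, Set.mem_insert_iff, Set.mem_singleton_iff, Prod.mk.injEq]
    grind

theorem phi_self {G : PlaneGraph V} {L : V → Finset ℕ} {p1 p2 : V} {C : Set (ℕ × ℕ)}
    (hne : p1 ≠ p2) (hproper : ∀ c ∈ C, ProperEdgeColoring L p1 p2 c)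
    (hverts : G.verts = {p1, p2}) (hedges : ∀ u v, G.Adj u v → pathAdj p1 p2 u v) :
    Phi G L p1 p2 p1 p2 C = C := by
  classical
  ext ⟨s, t⟩
  constructor
  · rintro ⟨φ, -, -, h, rfl, rfl⟩
    exact h
  · intro h
    obtain ⟨k1, k2, k3⟩ := hproper _ h
    simp only at k1 k2 k3
    refine ⟨fun v => if v = p1 then s else t, ?_, ?_, ?_, ?_, ?_⟩
    · rw [hverts]
      rintro v (rfl | rfl)
      · simpa using k1
      · simpa [hne.symm] using k2
    · intro u v huv
      rcases hedges u v huv with ⟨rfl, rfl⟩ | ⟨rfl, rfl⟩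
      · simpa [hne.symm] using k3
      · simpa [hne.symm] using k3.symm
    · simpa [hne.symm] using h
    · simp
    · simp [hne.symm]

theorem phi_swap {G : PlaneGraph V} {L : V → Finset ℕ} {p1 p2 q1 q2 : V} {C : Set (ℕ × ℕ)} :
    Phi G L p1 p2 q2 q1 C = {c | (c.2, c.1) ∈ Phi G L p1 p2 q1 q2 C} := by
  ext ⟨s, t⟩
  constructor
  · rintro ⟨φ, h1, h2, h3, h4, h5⟩
    exact ⟨φ, h1, h2, h3, h5, h4⟩
  · rintro ⟨φ, h1, h2, h3, h4, h5⟩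
    exact ⟨φ, h1, h2, h3, h5, h4⟩

/-- The cherry, with the shared vertex listed first in the target path. -/
theorem phi_cherry {G : PlaneGraph V} {L : V → Finset ℕ} {p1 p2 z w q : V} {c d : ℕ}
    {C : Set (ℕ × ℕ)} (hzw : z ≠ w) (hqz : q ≠ z) (hqw : q ≠ w)
    (hverts : ∀ v ∈ G.verts, v = z ∨ v = w ∨ v = q)
    (hedges : ∀ u v, G.Adj u v → pathAdj z w u v ∨ pathAdj z q u v)
    (hcard : 3 ≤ (L q).card) (hcL : c ∈ L z) (hdL : d ∈ L w) (hcd : c ≠ d)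
    (hC : ∀ φ : V → ℕ, φ z = c → φ w = d → (φ p1, φ p2) ∈ C)
    (hCz : ∀ φ : V → ℕ, (φ p1, φ p2) ∈ C → φ z = c) :
    IsGovernment (Phi G L p1 p2 z q C) := by
  classical
  have key : ∀ t ∈ L q, t ≠ c → (c, t) ∈ Phi G L p1 p2 z q C := by
    intro t ht htc
    refine ⟨fun v => if v = z then c else if v = w then d else t, ?_, ?_, ?_, ?_, ?_⟩
    · intro v hv
      rcases hverts v hv with rfl | rfl | rfl
      · simpa using hcL
      · simpa [hzw.symm] using hdL
      · simpa [hqz, hqw] using ht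
    · intro u v huv
      rcases hedges u v huv with (⟨rfl, rfl⟩ | ⟨rfl, rfl⟩) | (⟨rfl, rfl⟩ | ⟨rfl, rfl⟩)
      · simpa [hzw.symm] using hcd
      · simpa [hzw.symm] using hcd.symm
      · simpa [hqz, hqw] using htc.symm
      · simpa [hqz, hqw] using htc
    · refine hC (fun v => if v = z then c else if v = w then d else t) ?_ ?_
      · simp
      · simp [hzw.symm]
    · simp
    · simp [hqz, hqw]
  have h2 : 1 < ((L q).erase c).card := by
    have := Finset.pred_card_le_card_erase (s := L q) (a := c)
    omega
  obtain ⟨s, hs, t, ht, hst⟩ := Finset.one_lt_card.1 h2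
  rw [Finset.mem_erase] at hs ht
  refine Or.inl ⟨⟨(c, s), key s hs.2 hs.1, (c, t), key t ht.2 ht.1, ?_⟩, Or.inl ⟨c, ?_⟩⟩
  · simpa using hst
  · rintro e ⟨φ, -, -, h3, h4, -⟩
    rw [← h4]
    exact hCz φ h3

theorem phi_cherry' {G : PlaneGraph V} {L : V → Finset ℕ} {p1 p2 z w q1 q2 : V} {c d : ℕ}
    {C : Set (ℕ × ℕ)} {A : V → V → Prop} (hcv : IsCanvas G {z, w} A L)
    (hzw : z ≠ w) (hq : q1 ≠ q2)
    (hqadj : G.Adj q1 q2)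
    (hverts : ∀ v ∈ G.verts, v = z ∨ v = w ∨ v = q1 ∨ v = q2)
    (hedges : ∀ u v, G.Adj u v → pathAdj z w u v ∨ pathAdj q1 q2 u v)
    (hz : (({z, w} : Set V) ∩ ({q1, q2} : Set V)) = {z})
    (hcL : c ∈ L z) (hdL : d ∈ L w) (hcd : c ≠ d)
    (hC : ∀ φ : V → ℕ, φ z = c → φ w = d → (φ p1, φ p2) ∈ C)
    (hCz : ∀ φ : V → ℕ, (φ p1, φ p2) ∈ C → φ z = c) :
    IsGovernment (Phi G L p1 p2 q1 q2 C) := by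
  have hzq : z ∈ ({q1, q2} : Set V) := by
    have : z ∈ (({z, w} : Set V) ∩ ({q1, q2} : Set V)) := by rw [hz]; rfl
    exact this.2
  have hwq : w ∉ ({q1, q2} : Set V) := by
    intro hw
    have : w ∈ (({z, w} : Set V) ∩ ({q1, q2} : Set V)) := ⟨by simp, hw⟩
    rw [hz] at this
    exact hzw this.symm
  simp only [Set.mem_insert_iff, Set.mem_singleton_iff, not_or] at hzq hwq
  rcases hzq with rfl | rfl
  · have hqw : q2 ≠ w := fun h => hwq.2 h.symm
    refine phi_cherry hzw hq.symm hqw (fun v hv => ?_) hedges ?_ hcL hdL hcd hC hCz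
    · have := hverts v hv
      tauto
    · exact hcv.card_outside_S q2 (PlaneGraph.adj_mem' hqadj) (by simp [hq.symm, hqw])
  · have hqw : q1 ≠ w := fun h => hwq.1 h.symm
    rw [phi_swap]
    refine swap_gov ?_
    refine phi_cherry hzw hq hqw (fun v hv => ?_) (fun u v huv => ?_) ?_ hcL hdL hcd hC hCz
    · have := hverts v hv
      tauto
    · have := hedges u v huv
      unfold pathAdj at *
      tauto
    · exact hcv.card_outside_S q1 (G.adj_mem _ _ hqadj) (by simp [hq, hqw])

theorem IsHarmonica.phi_gov {L : V → Finset ℕ} {G : PlaneGraph V} {p1 p2 q1 q2 : V}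
    {C : Set (ℕ × ℕ)} (h : IsHarmonica L G p1 p2 q1 q2 C) :
    IsGovernment (Phi G L p1 p2 q1 q2 C) := by
  induction h with
  | same G p1 p2 q1 q2 C hcanvas hproper hgov hq hverts hedges =>
    have key := phi_self hcanvas.1 hproper hverts hedges
    rcases hq with ⟨rfl, rfl⟩ | ⟨rfl, rfl⟩
    · rw [key]; exact hgov
    · rw [phi_swap, key]; exact swap_gov hgov
  | cherry G p1 p2 q1 q2 z C hcanvas hproper hdict hq hqadj hqout hverts hedges hz hzdict =>
    obtain ⟨⟨e, he, -⟩, -⟩ := hdict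
    obtain ⟨k1, k2, k3⟩ := hproper e he
    rcases hzdict with ⟨rfl, a, ha⟩ | ⟨rfl, a, ha⟩
    · refine phi_cherry' hcanvas.2 hcanvas.1 hq hqadj (fun v hv => ?_) hedges hz k1 k2 k3
        (fun φ h1 h2 => ?_) (fun φ h => ?_)
      · rw [hverts] at hv; exact hv
      · rw [h1, h2]; exact he
      · rw [ha e he]; exact ha _ h
    · refine phi_cherry' hcanvas.2.swap hcanvas.1.symm hq hqadj (fun v hv => ?_)
        (fun u v huv => ?_) (by rw [Set.pair_comm]; exact hz) k2 k1 k3.symm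
        (fun φ h1 h2 => ?_) (fun φ h => ?_)
      · rw [hverts] at hv
        simp only [Set.mem_insert_iff, Set.mem_singleton_iff] at hv
        tauto
      · have := hedges u v huv
        unfold pathAdj at *
        tauto
      · rw [h1, h2]; exact he
      · rw [ha e he]; exact ha _ h
  | dict G p1 p2 q1 q2 z w u1 u2 c L0 C C' hcanvas hproper hdict hq hqadj hqout hz hzu1 hzu2 hu12
      hL0 hLu1 hLu2 hu1P hu2P hdem hC'1 hC'2 hrec ih =>
    have hL1 : u1 ≠ w → L u1 = L0 ∪ {c} := fun hne => hLu1 (fun h => hne (hu1P h))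
    have hL2 : u2 ≠ w → L u2 = L0 ∪ {c} := fun hne => hLu2 (fun h => hne (hu2P h))
    have hS := hrec.str
    obtain ⟨⟨e, he, f, hf, hef⟩, -⟩ := hdict
    rcases hz with ⟨rfl, rfl, hc, hw1, hw2⟩ | ⟨rfl, rfl, hc, hw1, hw2⟩
    · rw [dict_phi (W := sndColors C) hcanvas.2 hcanvas.adj hzu1 hzu2 hu12 hL0 hL1 hL2 hdem hC'1
        ?_ ?_ ?_ ?_ hw1 hw2 ?_ hS]
      · exact ih
      · rw [← hc e he]; exact (hproper e he).1
      · rintro _ ⟨d, hd, rfl⟩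
        exact (hproper d hd).2.1
      · rintro _ ⟨d, hd, rfl⟩
        rw [← hc d hd]; exact (hproper d hd).2.2.symm
      · exact ⟨e.2, ⟨e, he, rfl⟩, f.2, ⟨f, hf, rfl⟩, fun h =>
          hef (Prod.ext ((hc e he).trans (hc f hf).symm) h)⟩
      · intro φ
        constructor
        · intro h
          exact ⟨hc _ h, _, h, rfl⟩
        · rintro ⟨h1, d, hd, h2⟩
          have : d = (φ z, φ w) := Prod.ext ((hc d hd).trans h1.symm) h2
          rwa [← this]
    · rw [Set.pair_comm] at hS ih
      rw [dict_phi (W := fstColors C) hcanvas.2.swap (G.adj_symm _ _ hcanvas.adj) hzu1 hzu2 hu12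
        hL0 hL1 hL2 hdem hC'1 ?_ ?_ ?_ ?_ hw1 hw2 ?_ hS]
      · exact ih
      · rw [← hc e he]; exact (hproper e he).2.1
      · rintro _ ⟨d, hd, rfl⟩
        exact (hproper d hd).1
      · rintro _ ⟨d, hd, rfl⟩
        rw [← hc d hd]; exact (hproper d hd).2.2
      · exact ⟨e.1, ⟨e, he, rfl⟩, f.1, ⟨f, hf, rfl⟩, fun h =>
          hef (Prod.ext h ((hc e he).trans (hc f hf).symm))⟩
      · intro φ
        constructor
        · intro h
          exact ⟨hc _ h, _, h, rfl⟩
        · rintro ⟨h1, d, hd, h2⟩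
          have : d = (φ w, φ z) := Prod.ext h2 ((hc d hd).trans h1.symm)
          rwa [← this]
  | demo1 G p1 p2 q1 q2 z a b c L0 C C' hcanvas hproper hdemC hq hqadj hqout hz1 hz2 hLz hC1 hC2
      hab hL0ab hC' hrec ih =>
    subst hC'
    have hCe := dem_of_pair hdemC hC1 hab hL0ab
    subst hCe
    have k1 := hproper (a, b) (by simp)
    have k2 := hproper (b, a) (by simp)
    rw [demo_phi hcanvas.2 hcanvas.adj hqadj hqout hz1 hz2 hLz hab hL0ab k1.1 k2.1 k2.2.1 k1.2.1
      (fun φ => by simp) hrec.str]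
    exact ih
  | demo2 G p1 p2 q1 q2 z a b c L0 C C' hcanvas hproper hdemC hq hqadj hqout hz1 hz2 hLz hC1 hC2
      hab hL0ab hC' hrec ih =>
    subst hC'
    have hCe := dem_of_pair hdemC hC1 hab hL0ab
    subst hCe
    have k1 := hproper (a, b) (by simp)
    have k2 := hproper (b, a) (by simp)
    rw [demo_phi hcanvas.2.swap (G.adj_symm _ _ hcanvas.adj) hqadj hqout hz2 hz1 hLz hab hL0ab
      k2.2.1 k1.2.1 k1.1 k2.1 (fun φ => by
        simp only [Set.mem_insert_iff, Set.mem_singleton_iff, Prod.mk.injEq]; tauto) hrec.str]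
    exact ih

end Main

/-- let `T = (G, P, L)` be a harmonica from `P = p₁p₂` to
`P' = q₁q₂` with government `𝒞`. Then `Φ_T(P', 𝒞)` is a government. -/
theorem harmonica_phi_government {V : Type u} (G : PlaneGraph V)
    (p1 p2 q1 q2 : V) (L : V → Finset ℕ) (C : Set (ℕ × ℕ))
    (h : IsHarmonica L G p1 p2 q1 q2 C) :
    IsGovernment (Phi G L p1 p2 q1 q2 C) := by
  exact h.phi_gov
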